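/- Let Γ = ℤ^4 ⋊ ℤ/4 where the generator of ℤ/4 acts on ℤ^4 by the matrix [[-1,0,0,0],[0,0,0,-1],[0,1,0,1],[0,0,-1,1]]. Then H^1(Γ,ℤ) ≅ ℤ; H^2(Γ,ℤ) ≅ ℤ ⊕ ℤ/4 ⊕ ℤ/2; H^3(Γ,ℤ) ≅ ℤ ⊕ ℤ/4 ⊕ ℤ/2; and H^i(Γ,ℤ) ≅ ℤ/4 ⊕ (ℤ/2)^3 for all i ≥ 4. -/

import Mathlib

open Matrix

namespace Crystal

/-- The lattice `ℤ^n`, written multiplicatively so that it can be a factor of a semidirect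
product of groups. -/
abbrev Lat (n : ℕ) : Type := Multiplicative (Fin n → ℤ)

/-- The invertible integer matrix determined by `M` with `M ^ (m + 1) = 1`. -/
def matUnit {n : ℕ} (M : Matrix (Fin n) (Fin n) ℤ) (m : ℕ) (hm : M ^ (m + 1) = 1) :
    (Matrix (Fin n) (Fin n) ℤ)ˣ :=
  ⟨M, M ^ m, by rw [← pow_succ']; exact hm, by rw [← pow_succ]; exact hm⟩

/-- Linear automorphisms of `ℤ^n` as multiplicative automorphisms of the multiplicative
version of `ℤ^n`. -/
def linToAut (n : ℕ) : ((Fin n → ℤ) ≃ₗ[ℤ] (Fin n → ℤ)) →* MulAut (Lat n) :=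
  MonoidHom.mk' (fun e => AddEquiv.toMultiplicative e.toAddEquiv) (fun _ _ => rfl)

/-- An invertible integer matrix acts on the (multiplicative) lattice `ℤ^n` by (left)
matrix-vector multiplication. -/
def glToAut (n : ℕ) : (Matrix (Fin n) (Fin n) ℤ)ˣ →* MulAut (Lat n) :=
  (linToAut n).comp
    ((LinearMap.GeneralLinearGroup.generalLinearEquiv ℤ (Fin n → ℤ)).toMonoidHom.comp
      (Matrix.GeneralLinearGroup.toLin).toMonoidHom)

/-- The homomorphism from `ℤ/m` (written multiplicatively) to a group `G` sending the
generator `1` to a chosen element `α` satisfying `α ^ m = 1`. -/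
def zmodHom {G : Type*} [Group G] (m : ℕ) [NeZero m] (α : G) (hα : α ^ m = 1) :
    Multiplicative (ZMod m) →* G :=
  MonoidHom.mk' (fun g => α ^ (g.toAdd.val)) (by
    intro a b
    show α ^ (ZMod.val (a.toAdd + b.toAdd)) = α ^ (ZMod.val a.toAdd) * α ^ (ZMod.val b.toAdd)
    rw [ZMod.val_add, ← pow_eq_pow_mod _ hα, pow_add])

/-- The action of `ℤ/q` on the lattice `ℤ^n` in which the generator `1` of `ℤ/q` acts by left
multiplication by the integer matrix `M`; `M` is required to satisfy `M ^ q = 1`. -/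
def matAction {n : ℕ} (q : ℕ) [NeZero q] (M : Matrix (Fin n) (Fin n) ℤ)
    (hq : M ^ q = 1) : Multiplicative (ZMod q) →* MulAut (Lat n) :=
  zmodHom q (glToAut n (matUnit M (q - 1) (by
      rwa [Nat.sub_add_cancel (Nat.one_le_iff_ne_zero.2 (NeZero.ne q))])))
    (by
      rw [← map_pow]
      convert map_one (glToAut n)
      ext i j
      rw [Units.val_pow_eq_pow_val]
      simp [matUnit, hq])

/-- The crystallographic group `ℤ^n ⋊ ℤ/q` in which the generator `1` of `ℤ/q` acts on the
lattice `ℤ^n` by left multiplication by the integer matrix `M` (with `M ^ q = 1`). -/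
abbrev Crys {n : ℕ} (q : ℕ) [NeZero q] (M : Matrix (Fin n) (Fin n) ℤ) (hq : M ^ q = 1) : Type :=
  SemidirectProduct (Lat n) (Multiplicative (ZMod q)) (matAction q M hq)


open CategoryTheory groupCohomology

variable {k : Type} [CommRing k]

lemma comp_contractNth {G H : Type*} [Monoid G] [Monoid H] (f : G →* H) {n : ℕ}
    (j : Fin (n + 1)) (g : Fin (n + 1) → G) (i : Fin n) :
    f (Fin.contractNth j (· * ·) g i) = Fin.contractNth j (· * ·) (fun l => f (g l)) i := by
  rcases lt_trichotomy (i : ℕ) j with h | h | h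
  · rw [Fin.contractNth_apply_of_lt _ _ _ _ h, Fin.contractNth_apply_of_lt _ _ _ _ h]
  · rw [Fin.contractNth_apply_of_eq _ _ _ _ h, Fin.contractNth_apply_of_eq _ _ _ _ h,
      _root_.map_mul]
  · rw [Fin.contractNth_apply_of_gt _ _ _ _ h, Fin.contractNth_apply_of_gt _ _ _ _ h]

/-- The map of inhomogeneous cochain complexes induced (contravariantly in the group,
covariantly in the coefficients) by a group homomorphism `f : H →* G` together with a
compatible linear map `τ : A → B` of coefficients. -/
def cochainsMap {G H : Type} [Group G] [Group H] (A : Rep k G) (B : Rep k H)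
    (f : H →* G) (τ : A →ₗ[k] B)
    (hcomp : ∀ (h : H) (a : A), τ (A.ρ (f h) a) = B.ρ h (τ a)) :
    inhomogeneousCochains A ⟶ inhomogeneousCochains B where
  f n := ModuleCat.ofHom
    { toFun := fun F v => τ (F (fun i => f (v i)))
      map_add' := fun x y => by funext v; simp
      map_smul' := fun r x => by funext v; simp }
  comm' i j hij := by
    have hij' : i + 1 = j := hij
    subst hij'
    rw [inhomogeneousCochains.d_def, inhomogeneousCochains.d_def]
    ext F v
    simp only [ModuleCat.hom_comp, LinearMap.comp_apply]
    show (inhomogeneousCochains.d B i).hom (fun w => τ (F (fun l => f (w l)))) v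
      = τ ((inhomogeneousCochains.d A i).hom F (fun l => f (v l)))
    simp only [inhomogeneousCochains.d_hom_apply, map_add, map_sum, _root_.map_smul]
    congr 1
    · exact (hcomp (v 0) _).symm
    · refine Finset.sum_congr rfl fun j' _ => ?_
      have hc : (fun l => f (j'.contractNth (· * ·) v l))
          = j'.contractNth (· * ·) (fun l => f (v l)) := by
        funext l
        exact comp_contractNth f j' v l
      rw [hc]

lemma cochainsMap_eq_id {G : Type} [Group G] (A : Rep k G) (f : G →* G) (τ : A →ₗ[k] A)
    (hcomp : ∀ (h : G) (a : A), τ (A.ρ (f h) a) = A.ρ h (τ a))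
    (hf : ∀ x, f x = x) (hτ : ∀ a, τ a = a) :
    cochainsMap A A f τ hcomp = 𝟙 _ := by
  apply HomologicalComplex.Hom.ext
  funext n
  ext F v
  show τ (F (fun i => f (v i))) = F v
  simp only [hf, hτ]

lemma cochainsMap_comp {G H K : Type} [Group G] [Group H] [Group K]
    (A : Rep k G) (B : Rep k H) (C : Rep k K)
    (f₁ : H →* G) (τ₁ : A →ₗ[k] B) (h₁ : ∀ (h : H) (a : A), τ₁ (A.ρ (f₁ h) a) = B.ρ h (τ₁ a))
    (f₂ : K →* H) (τ₂ : B →ₗ[k] C) (h₂ : ∀ (h : K) (a : B), τ₂ (B.ρ (f₂ h) a) = C.ρ h (τ₂ a))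
    (f₃ : K →* G) (τ₃ : A →ₗ[k] C) (h₃ : ∀ (h : K) (a : A), τ₃ (A.ρ (f₃ h) a) = C.ρ h (τ₃ a))
    (hf : ∀ x, f₁ (f₂ x) = f₃ x) (hτ : ∀ a, τ₂ (τ₁ a) = τ₃ a) :
    cochainsMap A B f₁ τ₁ h₁ ≫ cochainsMap B C f₂ τ₂ h₂ = cochainsMap A C f₃ τ₃ h₃ := by
  apply HomologicalComplex.Hom.ext
  funext n
  ext F v
  show τ₂ (τ₁ (F (fun i => f₁ (f₂ (v i))))) = τ₃ (F (fun i => f₃ (v i)))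
  simp only [hf]
  exact hτ _

/-- Given an action `φ` of a group `G` on a group `L` and a representation `ψ` of `G` on a
`k`-module `V`, this is `H^j(L, V)` (with `L` acting trivially on the coefficients `V`),
endowed with the `G`-action functorially induced by the action of `G` on `L` and on `V`:
`g` acts via the conjugation automorphism `φ g⁻¹` of `L` and via `ψ g` on `V`. -/
noncomputable def cohRep {G L V : Type} [Group G] [Group L] [AddCommGroup V] [Module k V]
    (φ : G →* MulAut L) (ψ : Representation k G V) (j : ℕ) : Rep k G :=
  Rep.of (X := groupCohomology (Rep.trivial k L V) j)
    { toFun := fun g => (HomologicalComplex.homologyMap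
        (cochainsMap (Rep.trivial k L V) (Rep.trivial k L V) (φ g⁻¹).toMonoidHom (ψ g)
          (fun _ _ => rfl)) j).hom
      map_one' := by
        have h := cochainsMap_eq_id (Rep.trivial k L V) (φ 1⁻¹).toMonoidHom (ψ 1)
          (fun _ _ => rfl) (fun x => by simp) (fun a => by simp)
        rw [h]
        exact congrArg ModuleCat.Hom.hom (HomologicalComplex.homologyMap_id _ j)
      map_mul' := fun g₁ g₂ => by
        have h := cochainsMap_comp (Rep.trivial k L V) (Rep.trivial k L V) (Rep.trivial k L V)
          (φ g₂⁻¹).toMonoidHom (ψ g₂) (fun _ _ => rfl)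
          (φ g₁⁻¹).toMonoidHom (ψ g₁) (fun _ _ => rfl)
          (φ (g₁ * g₂)⁻¹).toMonoidHom (ψ (g₁ * g₂)) (fun _ _ => rfl)
          (fun x => by simp [_root_.mul_inv_rev]) (fun a => by simp)
        rw [← h, HomologicalComplex.homologyMap_comp]
        rfl }


/-- `H^i(G, H^j(L, ℤ))`: the `i`-th cohomology of the cyclic group `ℤ/q` with coefficients in
the `j`-th cohomology of the lattice `ℤ^n` (with trivial `ℤ` coefficients), where the
`ℤ/q`-action on `H^j(ℤ^n, ℤ)` is the one functorially induced by the matrix action on the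
lattice. -/
noncomputable abbrev cohOfCoh {n : ℕ} (q : ℕ) [NeZero q] (M : Matrix (Fin n) (Fin n) ℤ)
    (hq : M ^ q = 1) (i j : ℕ) : ModuleCat ℤ :=
  groupCohomology
    (cohRep (matAction q M hq) (1 : Representation ℤ (Multiplicative (ZMod q)) ℤ) j) i

/-- `H^k(Γ, ℤ)` for `Γ = ℤ^n ⋊ ℤ/q`, with trivial coefficients `ℤ`. -/
noncomputable abbrev cohCrys {n : ℕ} (q : ℕ) [NeZero q] (M : Matrix (Fin n) (Fin n) ℤ)
    (hq : M ^ q = 1) (k : ℕ) : ModuleCat ℤ :=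
  groupCohomology (Rep.trivial ℤ (Crys q M hq) ℤ) k

end Crystal

/-- The holonomy matrix. -/
def holM : Matrix (Fin 4) (Fin 4) ℤ := !![-1, 0, 0, 0; 0, 0, 0, -1; 0, 1, 0, 1; 0, 0, -1, 1]

lemma holM_pow : holM ^ 4 = 1 := by decide

/-- `H^k(ℤ^4 ⋊ ℤ/4, ℤ)`, where the generator of `ℤ/4` acts on `ℤ^4` by left
multiplication by the matrix `holM`. -/
noncomputable abbrev H (k : ℕ) : ModuleCat ℤ := Crystal.cohCrys 4 holM holM_pow k

/-- `H^i(ℤ/4, H^j(ℤ^4, ℤ))`, with the functorially induced action on coefficients. -/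
noncomputable abbrev Hc (i j : ℕ) : ModuleCat ℤ := Crystal.cohOfCoh 4 holM holM_pow i j

open CategoryTheory

namespace FreeRes

/-- The data of a complex of representations, free over the group, resolving the trivial module. -/
structure Data (k : Type) [CommRing k] (Γ : Type) [Group Γ] where
  V : ℕ → Type
  [ag : ∀ n, AddCommGroup (V n)]
  [md : ∀ n, Module k (V n)]
  ρ : ∀ n, Representation k Γ (V n)
  d : ∀ n, V (n + 1) →ₗ[k] V n
  d_comm : ∀ n g x, d n (ρ (n + 1) g x) = ρ n g (d n x)
  dd : ∀ n x, d n (d (n + 1) x) = 0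
  ε : V 0 →ₗ[k] k
  ε_comm : ∀ g x, ε (ρ 0 g x) = ε x
  εd : ∀ x, ε (d 0 x) = 0
  ε_surj : Function.Surjective ε
  exact_zero : ∀ x, ε x = 0 → ∃ y, d 0 y = x
  exact_succ : ∀ n x, d n x = 0 → ∃ y, d (n + 1) y = x
  I : ℕ → Type
  b : ∀ n, Module.Basis (Γ × I n) k (V n)
  hb : ∀ n g h i, ρ n g (b n (h, i)) = b n (g * h, i)

attribute [instance] Data.ag Data.md

variable {k : Type} [CommRing k] {Γ : Type} [Group Γ] (D : Data k Γ)

namespace Data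

/-- The representations in the resolution. -/
noncomputable def rep (n : ℕ) : Rep k Γ := Rep.of (D.ρ n)

/-- A map out of a free representation is given by arbitrary values on the free generators. -/
noncomputable def lift (n : ℕ) (A : Rep.{0} k Γ) (F : D.I n → A) : D.rep n ⟶ A :=
  Rep.ofHom (σ := A.ρ) ((LinearMap.intertwiningMap_of_isIntertwiningMap
    (f := (D.b n).constr k (fun p => A.ρ p.1 (F p.2))) (ρ := D.ρ n) (σ := A.ρ) (by
      intro g v
      have : ((D.b n).constr k (fun p => A.ρ p.1 (F p.2))) ∘ₗ (D.ρ n g) =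
        (A.ρ g) ∘ₗ ((D.b n).constr k (fun p => A.ρ p.1 (F p.2))) := by
        refine (D.b n).ext ?_
        rintro ⟨h, i⟩
        simp [D.hb]
      exact LinearMap.congr_fun this v)))

lemma lift_apply (n : ℕ) (A : Rep.{0} k Γ) (F : D.I n → A) (x : D.V n) :
    (D.lift n A F).hom x = (D.b n).constr k (fun p => A.ρ p.1 (F p.2)) x := rfl

lemma lift_b (n : ℕ) (A : Rep.{0} k Γ) (F : D.I n → A) (g : Γ) (i : D.I n) :
    (D.lift n A F).hom (D.b n (g, i)) = A.ρ g (F i) := by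
  rw [lift_apply]; simp

lemma hom_ext (n : ℕ) {A : Rep.{0} k Γ} (f g : D.rep n ⟶ A)
    (h : ∀ i, f.hom (D.b n (1, i)) = g.hom (D.b n (1, i))) : f = g := by
  apply Rep.hom_injective
  apply Representation.IntertwiningMap.ext
  refine (D.b n).ext ?_
  rintro ⟨γ, i⟩
  have e : D.b n (γ, i) = (D.rep n).ρ γ (D.b n (1, i)) := by
    have := D.hb n γ 1 i
    rw [mul_one] at this
    exact this.symm
  have e1 := Rep.hom_comm_apply f γ (D.b n (1, i))
  have e2 := Rep.hom_comm_apply g γ (D.b n (1, i))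
  rw [← e] at e1 e2
  exact e1.trans ((congrArg _ (h i)).trans e2.symm)

instance (n : ℕ) : Projective (D.rep n) where
  factors {E X} f e he := by
    rw [Rep.epi_iff_surjective] at he
    refine ⟨D.lift n E (fun i => (he (f.hom (D.b n (1, i)))).choose), ?_⟩
    apply D.hom_ext
    intro i
    have := (he (f.hom (D.b n (1, i)))).choose_spec
    rw [Rep.hom_comp]
    refine Eq.trans ?_ this
    have h2 := D.lift_b n E (fun i => (he (f.hom (D.b n (1, i)))).choose) 1 i
    rw [map_one] at h2
    exact congrArg e.hom h2

/-- The differential as a morphism of representations. -/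
noncomputable def dHom (n : ℕ) : D.rep (n + 1) ⟶ D.rep n :=
  Rep.ofHom (LinearMap.intertwiningMap_of_isIntertwiningMap
    (f := D.d n) (ρ := D.ρ (n + 1)) (σ := D.ρ n) (D.d_comm n))

lemma dHom_apply (n : ℕ) (x : D.V (n + 1)) : (D.dHom n).hom x = D.d n x := rfl

/-- The chain complex. -/
noncomputable def cx : ChainComplex (Rep k Γ) ℕ :=
  ChainComplex.of D.rep D.dHom (fun n => by
    ext x
    exact D.dd n x)

lemma cx_d (n : ℕ) : D.cx.d (n + 1) n = D.dHom n := ChainComplex.of_d _ _ _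

/-- The augmentation. -/
noncomputable def εHom : D.rep 0 ⟶ Rep.trivial k Γ k :=
  Rep.ofHom (LinearMap.intertwiningMap_of_isIntertwiningMap
    (f := D.ε) (ρ := D.ρ 0) (σ := Representation.trivial k Γ k) (fun g v => D.ε_comm g v))

noncomputable def π : D.cx ⟶ (ChainComplex.single₀ (Rep k Γ)).obj (Rep.trivial k Γ k) :=
  (D.cx.toSingle₀Equiv _).symm ⟨D.εHom, by
    rw [cx_d]
    ext x
    exact D.εd x⟩

lemma quasiIso : QuasiIso D.π where
  quasiIsoAt m := by
    induction m with
    | zero =>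
      simp only [π]
      rw [ChainComplex.quasiIsoAt₀_iff, ShortComplex.quasiIso_iff_of_zeros' _ rfl rfl rfl]
      constructor
      · apply (forget₂ _ (ModuleCat k)).reflects_exact_of_faithful
        rw [ShortComplex.moduleCat_exact_iff]
        intro x hx
        obtain ⟨y, hy⟩ := D.exact_zero x (by
          simpa [ChainComplex.toSingle₀Equiv] using! hx)
        refine ⟨y, ?_⟩
        have : D.cx.d 1 0 = D.dHom 0 := D.cx_d 0
        rw [← hy, ← dHom_apply, ← this]
        rfl
      · rw [Rep.epi_iff_surjective]
        intro x
        obtain ⟨y, hy⟩ := D.ε_surj x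
        refine ⟨y, ?_⟩
        simpa [ChainComplex.toSingle₀Equiv] using! hy
    | succ m _ =>
      rw [quasiIsoAt_iff_exactAt' (hL := ChainComplex.exactAt_succ_single_obj ..),
          HomologicalComplex.exactAt_iff' _ (m + 2) (m + 1) m (by simp) (by simp)]
      apply (forget₂ _ (ModuleCat k)).reflects_exact_of_faithful
      rw [ShortComplex.moduleCat_exact_iff]
      intro x hx
      have key : ∀ (j : ℕ) (z : D.V (j + 1)), (D.cx.d (j + 1) j).hom z = D.d j z := by
        intro j z
        exact congrArg (fun f : D.rep (j + 1) ⟶ D.rep j => f.hom z) (D.cx_d j)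
      obtain ⟨y, hy⟩ := D.exact_succ m x ((key m x).symm.trans hx)
      exact ⟨y, (key (m + 1) y).trans hy⟩

/-- The projective resolution. -/
noncomputable def res : ProjectiveResolution (Rep.trivial k Γ k) where
  complex := D.cx
  projective n := inferInstanceAs (Projective (D.rep n))
  π := D.π
  quasiIso := D.quasiIso

/-- The coboundary on the small cochain complex. -/
noncomputable def δ (n : ℕ) (F : D.I n → k) : D.I (n + 1) → k := fun i =>
  (D.b n).constr k (fun p => F p.2) (D.d n (D.b (n + 1) (1, i)))

/-- evaluating a cochain on generators. -/
noncomputable def ev (n : ℕ) (f : D.rep n ⟶ Rep.trivial k Γ k) : D.I n → k :=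
  fun i => f.hom (D.b n (1, i))

lemma hom_eq (n : ℕ) (f : D.rep n ⟶ Rep.trivial k Γ k) :
    f = D.lift n (Rep.trivial k Γ k) (D.ev n f) := by
  apply D.hom_ext
  intro i
  rw [lift_b]; rfl

lemma ev_lift (n : ℕ) (F : D.I n → k) : D.ev n (D.lift n (Rep.trivial k Γ k) F) = F := by
  funext i
  exact D.lift_b n (Rep.trivial k Γ k) F 1 i

lemma ev_comp (n : ℕ) (f : D.rep n ⟶ Rep.trivial k Γ k) :
    D.ev (n + 1) (D.dHom n ≫ f) = D.δ n (D.ev n f) := by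
  funext i
  conv_lhs => rw [D.hom_eq n f]
  rfl

theorem main (n : ℕ) {Q : Type} [AddCommGroup Q] (p : (D.I (n + 1) → k) →+ Q)
    (h1 : ∀ y, p (D.δ n y) = 0)
    (h2 : ∀ x, D.δ (n + 1) x = 0 → p x = 0 → ∃ y, D.δ n y = x)
    (h3 : ∀ q, ∃ x, D.δ (n + 1) x = 0 ∧ p x = q) :
    Nonempty (groupCohomology (Rep.trivial k Γ k) (n + 1) ≃+ Q) := by
  let C := D.cx.linearYonedaObj k (Rep.trivial k Γ k)
  let S : ShortComplex (ModuleCat k) := C.sc' n (n + 1) (n + 2)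
  have hSf : ∀ y : (D.rep n ⟶ Rep.trivial k Γ k), S.f.hom y = D.dHom n ≫ y := by
    intro y
    have := D.cx_d n
    rw [← this]
    rfl
  have hSg : ∀ y : (D.rep (n + 1) ⟶ Rep.trivial k Γ k), S.g.hom y = D.dHom (n + 1) ≫ y := by
    intro y
    have := D.cx_d (n + 1)
    rw [← this]
    rfl
  let e1 : groupCohomology (Rep.trivial k Γ k) (n + 1) ≅ C.homology (n + 1) :=
    groupCohomologyIso (Rep.trivial k Γ k) (n + 1) D.res
  let e2 : C.homology (n + 1) ≅ S.homology :=
    C.homologyIsoSc' n (n + 1) (n + 2) (by simp) (by simp)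
  let e3 : S.homology ≅ S.moduleCatLeftHomologyData.H := S.moduleCatHomologyIso
  let e : groupCohomology (Rep.trivial k Γ k) (n + 1) ≃+
      (LinearMap.ker S.g.hom ⧸ LinearMap.range S.moduleCatToCycles) :=
    (e1 ≪≫ e2 ≪≫ e3).toLinearEquiv.toAddEquiv
  let φ : LinearMap.ker S.g.hom →+ Q :=
    { toFun := fun x => p (D.ev (n + 1) x.1)
      map_zero' := by
        rw [← map_zero p]; rfl
      map_add' := fun x y => by
        rw [← map_add p]; rfl }
  have hφ : Function.Surjective φ := by
    intro q
    obtain ⟨x, hx, hq⟩ := h3 q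
    refine ⟨⟨D.lift (n + 1) (Rep.trivial k Γ k) x, ?_⟩, ?_⟩
    · refine (hSg _).trans ?_
      apply D.hom_ext
      intro i
      have := congrFun (D.ev_comp (n + 1) (D.lift (n + 1) (Rep.trivial k Γ k) x)) i
      rw [ev_lift, hx] at this
      exact this
    · show p (D.ev (n + 1) (D.lift (n + 1) (Rep.trivial k Γ k) x)) = q
      rw [ev_lift, hq]
  have hker : (LinearMap.range S.moduleCatToCycles).toAddSubgroup = φ.ker := by
    ext x
    rw [AddMonoidHom.mem_ker]
    constructor
    · rintro ⟨y, rfl⟩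
      show p (D.ev (n + 1) (S.f.hom y)) = 0
      exact (congrArg (fun z => p (D.ev (n + 1) z)) (hSf y)).trans
        ((congrArg p (D.ev_comp n y)).trans (h1 _))
    · intro hx
      obtain ⟨x, hxk⟩ := x
      have hxk' : D.dHom (n + 1) ≫ x = 0 := (hSg x).symm.trans hxk
      obtain ⟨y, hy⟩ := h2 (D.ev (n + 1) x) 
        ((D.ev_comp (n + 1) x).symm.trans (congrArg (D.ev (n + 2)) hxk')) hx
      refine ⟨D.lift n (Rep.trivial k Γ k) y, ?_⟩
      apply Subtype.ext
      show S.f.hom (D.lift n (Rep.trivial k Γ k) y) = x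
      refine (hSf _).trans ?_
      apply D.hom_ext
      intro i
      have := congrFun (D.ev_comp n (D.lift n (Rep.trivial k Γ k) y)) i
      rw [ev_lift, hy] at this
      exact this
  exact ⟨e.trans ((QuotientAddGroup.quotientAddEquivOfEq hker).trans
    (QuotientAddGroup.quotientKerEquivOfSurjective φ hφ))⟩

end Data
end FreeRes

set_option linter.unusedSimpArgs false
namespace Contr

/-- A contracted differential, in an abstract ring of endomorphisms: differential `d`,
contraction `s`, projection `e` onto the base point, sign `σ` and degree `N`. -/
structure Ax {A : Type*} [Ring A] (d s e σ N : A) : Prop where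
  dd : d * d = 0
  h : d * s = 1 - e - s * d
  ed : e * d = 0
  de : d * e = 0
  σd : σ * d = -(d * σ)
  σs : σ * s = -(s * σ)
  σe : σ * e = e
  eσ : e * σ = e
  Nd : N * d = d * N - d
  Ns : N * s = s * N + s
  Ne : N * e = 0
  eN : e * N = 0
  Nσ : N * σ = σ * N

theorem Ax.prod {A B C : Type*} [Ring A] [Ring B] [Ring C] (L : A →+* C) (R : B →+* C)
    (hc : ∀ a b, R b * L a = L a * R b)
    {d s e σ N : A} {d' s' e' σ' N' : B} (a : Ax d s e σ N) (b : Ax d' s' e' σ' N') :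
    Ax (L d + L σ * R d') (L s + L e * R s') (L e * R e') (L σ * R σ') (L N + R N') := by
  have m1 : ∀ x y x' y', (L x * R y) * (L x' * R y') = L (x * x') * R (y * y') := by
    intro x y x' y'
    rw [mul_assoc, ← mul_assoc (R y), hc, map_mul, map_mul]; simp only [mul_assoc]
  have m2 : ∀ x x' y', L x * (L x' * R y') = L (x * x') * R y' := by
    intro x x' y'
    rw [map_mul, mul_assoc]
  have m3 : ∀ x y x', (L x * R y) * L x' = L (x * x') * R y := by
    intro x y x'
    rw [map_mul, mul_assoc, hc, mul_assoc]
  have m4 : ∀ x y y', (L x * R y) * R y' = L x * R (y * y') := by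
    intro x y y'
    rw [map_mul, mul_assoc]
  have m5 : ∀ y x' y', R y * (L x' * R y') = L x' * R (y * y') := by
    intro x x' y'
    rw [map_mul, ← mul_assoc, hc, mul_assoc]
  have m6 : ∀ x x', L x * L x' = L (x * x') := fun x x' => (map_mul L x x').symm
  have m7 : ∀ x x', R x * R x' = R (x * x') := fun x x' => (map_mul R x x').symm
  constructor <;>
  simp only [add_mul, mul_add, m1, m2, m3, m4, m5, m6, m7, hc, a.dd, a.h, a.ed, a.de, a.σd, a.σs,
    a.σe, a.eσ, a.Nd, a.Ns, a.Ne, a.eN, a.Nσ, b.dd, b.h, b.ed, b.de, b.σd, b.σs,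
    b.σe, b.eσ, b.Nd, b.Ns, b.Ne, b.eN, b.Nσ, map_zero, map_neg, map_sub, map_add, map_one,
    mul_zero, zero_mul, neg_mul, mul_neg, mul_sub, sub_mul, mul_one, one_mul] <;> abel

/-- The free abelian group on a set of cells. -/
abbrev W (X : Type) := X →₀ ℤ

/-- The ring of endomorphisms. -/
abbrev E (X : Type) := Module.End ℤ (W X)

/-- An endomorphism given on cells. -/
noncomputable def mk {X : Type} (f : X → W X) : E X := Finsupp.linearCombination ℤ f

@[simp] lemma mk_single {X : Type} (f : X → W X) (x : X) (a : ℤ) :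
    mk f (Finsupp.single x a) = a • f x := by simp [mk]

lemma ext1 {X : Type} {f g : E X} (h : ∀ x, f (Finsupp.single x 1) = g (Finsupp.single x 1)) :
    f = g := by
  apply Finsupp.lhom_ext'
  intro x
  exact LinearMap.ext_ring (by simpa using h x)

/-- Action on the left factor. -/
noncomputable def Lh (X Y : Type) : E X →+* E (X × Y) where
  toFun f := mk (fun p => Finsupp.mapDomain (fun x => (x, p.2)) (f (Finsupp.single p.1 1)))
  map_one' := by
    apply ext1; intro x; simp [Finsupp.mapDomain_single]
  map_zero' := by
    apply ext1; intro x; simp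
  map_add' f g := by
    apply ext1; intro x; simp [Finsupp.mapDomain_add]
  map_mul' f g := by
    apply ext1; rintro ⟨x, y⟩
    simp only [mk_single, one_smul, Module.End.mul_apply]
    generalize g (Finsupp.single x 1) = z
    induction z using Finsupp.induction_linear with
    | zero => simp
    | add a b ha hb => simp [Finsupp.mapDomain_add, ha, hb]
    | single a c =>
      rw [Finsupp.mapDomain_single, mk_single, ← Finsupp.mapDomain_smul, ← map_smul]
      simp

/-- Action on the right factor. -/
noncomputable def Rh (X Y : Type) : E Y →+* E (X × Y) where
  toFun f := mk (fun p => Finsupp.mapDomain (fun y => (p.1, y)) (f (Finsupp.single p.2 1)))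
  map_one' := by
    apply ext1; intro x; simp [Finsupp.mapDomain_single]
  map_zero' := by
    apply ext1; intro x; simp
  map_add' f g := by
    apply ext1; intro x; simp [Finsupp.mapDomain_add]
  map_mul' f g := by
    apply ext1; rintro ⟨x, y⟩
    simp only [mk_single, one_smul, Module.End.mul_apply]
    generalize g (Finsupp.single y 1) = z
    induction z using Finsupp.induction_linear with
    | zero => simp
    | add a b ha hb => simp [Finsupp.mapDomain_add, ha, hb]
    | single a c =>
      rw [Finsupp.mapDomain_single, mk_single, ← Finsupp.mapDomain_smul, ← map_smul]
      simp

lemma Lh_single {X Y : Type} (f : E X) (x : X) (y : Y) :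
    Lh X Y f (Finsupp.single (x, y) 1) =
      Finsupp.mapDomain (fun x => (x, y)) (f (Finsupp.single x 1)) := by
  simp [Lh]

lemma Rh_single {X Y : Type} (f : E Y) (x : X) (y : Y) :
    Rh X Y f (Finsupp.single (x, y) 1) =
      Finsupp.mapDomain (fun y => (x, y)) (f (Finsupp.single y 1)) := by
  simp [Rh]

lemma LR_comm (X Y : Type) (f : E X) (g : E Y) : Rh X Y g * Lh X Y f = Lh X Y f * Rh X Y g := by
  have h1 : ∀ (x : X) (w : W Y), Lh X Y f (Finsupp.mapDomain (fun y => (x, y)) w) =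
      w.sum (fun y a => a • Finsupp.mapDomain (fun x => (x, y)) (f (Finsupp.single x 1))) := by
    intro x w
    induction w using Finsupp.induction_linear with
    | zero => simp
    | add a b ha hb =>
      rw [Finsupp.mapDomain_add, map_add, ha, hb, Finsupp.sum_add_index'] <;> intros <;>
        simp [add_smul]
    | single a c =>
      rw [Finsupp.mapDomain_single, Finsupp.sum_single_index (by simp), ← Lh_single, ← map_smul]
      simp
  have h2 : ∀ (y : Y) (w : W X), Rh X Y g (Finsupp.mapDomain (fun x => (x, y)) w) =
      (g (Finsupp.single y 1)).sum (fun y a => a • Finsupp.mapDomain (fun x => (x, y)) w) := by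
    intro y w
    induction w using Finsupp.induction_linear with
    | zero => simp
    | add a b ha hb =>
      simp only [Finsupp.mapDomain_add, map_add, ha, hb, smul_add, Finsupp.sum_add]
    | single a c =>
      rw [Finsupp.mapDomain_single,
        show (Finsupp.single (a, y) c : W (X × Y)) = c • Finsupp.single (a, y) 1 by simp,
        map_smul, Rh_single, Finsupp.mapDomain, Finsupp.smul_sum]
      refine Finsupp.sum_congr fun z _ => ?_
      simp [Finsupp.mapDomain_single, mul_comm]
  apply ext1
  rintro ⟨x, y⟩
  rw [Module.End.mul_apply, Module.End.mul_apply, Lh_single, Rh_single, h1, h2]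

end Contr

set_option linter.unusedSimpArgs false
namespace Contr
open Finsupp

/-- The 1-chain from `0` to `2 n` on the line. -/
noncomputable def lF : ℤ → W ℤ
  | Int.ofNat k => ∑ j ∈ Finset.range k, single (2 * (j : ℤ) + 1) 1
  | Int.negSucc k => -∑ j ∈ Finset.range (k + 1), single (-(2 * (j : ℤ) + 1)) 1

lemma lF_zero : lF 0 = 0 := by
  show ∑ j ∈ Finset.range 0, _ = _
  simp

lemma lF_succ (n : ℤ) : lF (n + 1) = lF n + single (2 * n + 1) 1 := by
  rcases n with k | k
  · show ∑ j ∈ Finset.range (k + 1), _ = ∑ j ∈ Finset.range k, _ + _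
    rw [Finset.sum_range_succ]; rfl
  · rcases k with _ | k
    · show lF 0 = -∑ j ∈ Finset.range (0 + 1), _ + _
      rw [lF_zero]; simp
    · show -∑ j ∈ Finset.range (k + 1), _ = -∑ j ∈ Finset.range (k + 1 + 1), _ + _
      rw [Finset.sum_range_succ _ (k + 1)]
      have : 2 * Int.negSucc (k + 1) + 1 = -(2 * ((k + 1 : ℕ) : ℤ) + 1) := by
        rw [Int.negSucc_eq]; push_cast; ring
      rw [this]
      abel

/-- Differential on the line. -/
noncomputable def ld : E ℤ := mk fun c => if c % 2 = 0 then 0 else single (c + 1) 1 - single (c - 1) 1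
/-- Contraction of the line. -/
noncomputable def ls : E ℤ := mk fun c => if c % 2 = 0 then lF (c / 2) else 0
/-- Base point projection. -/
noncomputable def le : E ℤ := mk fun c => if c % 2 = 0 then single 0 1 else 0
/-- Sign. -/
noncomputable def lσ : E ℤ := mk fun c => if c % 2 = 0 then single c 1 else -single c 1
/-- Degree. -/
noncomputable def lN : E ℤ := mk fun c => if c % 2 = 0 then 0 else single c 1

lemma ev0 (n : ℤ) : 2 * n % 2 = 0 := by omega
lemma ev1 (n : ℤ) : ¬ (2 * n + 1) % 2 = 0 := by omega
lemma ev2 (n : ℤ) : 2 * n / 2 = n := by omega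

lemma ld_even (n : ℤ) : ld (single (2 * n) 1) = 0 := by simp [ld]
lemma ld_odd (n : ℤ) : ld (single (2 * n + 1) 1) = single (2 * (n + 1)) 1 - single (2 * n) 1 := by
  simp [ld, ev1, mul_add, add_assoc]
lemma ls_even (n : ℤ) : ls (single (2 * n) 1) = lF n := by simp [ls]
lemma ls_odd (n : ℤ) : ls (single (2 * n + 1) 1) = 0 := by simp [ls, ev1]
lemma le_even (n : ℤ) : le (single (2 * n) 1) = single 0 1 := by simp [le]
lemma le_odd (n : ℤ) : le (single (2 * n + 1) 1) = 0 := by simp [le, ev1]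
lemma lσ_even (n : ℤ) : lσ (single (2 * n) 1) = single (2 * n) 1 := by simp [lσ]
lemma lσ_odd (n : ℤ) : lσ (single (2 * n + 1) 1) = -single (2 * n + 1) 1 := by simp [lσ, ev1]
lemma lN_even (n : ℤ) : lN (single (2 * n) 1) = 0 := by simp [lN]
lemma lN_odd (n : ℤ) : lN (single (2 * n + 1) 1) = single (2 * n + 1) 1 := by simp [lN, ev1]
lemma le_zero : le (single 0 1) = single 0 1 := le_even 0
lemma ld_zero : ld (single 0 1) = 0 := ld_even 0
lemma lσ_zero : lσ (single 0 1) = single 0 1 := lσ_even 0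
lemma lN_zero : lN (single 0 1) = 0 := lN_even 0

lemma lF_ind (f : W ℤ →ₗ[ℤ] W ℤ) (a : ℤ → W ℤ) (h0 : a 0 = 0)
    (h : ∀ n, f (single (2 * n + 1) 1) = a (n + 1) - a n) (n : ℤ) : f (lF n) = a n := by
  induction n using Int.induction_on with
  | zero => simp [lF_zero, h0]
  | succ i ih => rw [lF_succ, map_add, ih, h]; abel
  | pred i ih =>
    have h1 := lF_succ (-(i : ℤ) - 1)
    have h2 := h (-(i : ℤ) - 1)
    rw [sub_add_cancel] at h1 h2
    rw [h1, map_add, h2] at ih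
    rw [← sub_eq_zero] at ih ⊢
    rw [← ih]; abel

lemma ld_F (n : ℤ) : ld (lF n) = single (2 * n) 1 - single 0 1 :=
  lF_ind ld (fun n => single (2 * n) 1 - single 0 1) (by simp) (fun n => by rw [ld_odd]; abel) n
lemma lσ_F (n : ℤ) : lσ (lF n) = -lF n :=
  lF_ind lσ (fun n => -lF n) (by simp [lF_zero]) (fun n => by rw [lσ_odd, lF_succ]; abel) n
lemma lN_F (n : ℤ) : lN (lF n) = lF n :=
  lF_ind lN (fun n => lF n) (by simp [lF_zero]) (fun n => by rw [lN_odd, lF_succ]; abel) n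

theorem line_ax : Ax ld ls le lσ lN := by
  constructor <;> apply ext1 <;> intro c <;> obtain ⟨n, rfl | rfl⟩ := Int.even_or_odd' c <;>
  simp only [Module.End.mul_apply, Module.End.one_apply, LinearMap.sub_apply, LinearMap.add_apply,
    LinearMap.neg_apply, LinearMap.zero_apply, ld_even, ld_odd, ls_even, ls_odd, le_even, le_odd,
    lσ_even, lσ_odd, lN_even, lN_odd, le_zero, ld_zero, lσ_zero, lN_zero, map_sub, map_neg,
    map_add, map_zero, ld_F, lσ_F, lN_F, lF_succ] <;> abel

/-- Differential of the periodic resolution. -/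
noncomputable def bdf : ZMod 4 × ℕ → W (ZMod 4 × ℕ)
  | (_, 0) => 0
  | (h, q + 1) => if q % 2 = 0 then single (h + 1, q) 1 - single (h, q) 1
      else single (h, q) 1 + single (h + 1, q) 1 + single (h + 2, q) 1 + single (h + 3, q) 1
/-- Contraction of the periodic resolution. -/
noncomputable def bsf : ZMod 4 × ℕ → W (ZMod 4 × ℕ) := fun p =>
  if p.2 % 2 = 0 then
    if p.1 = 0 then 0 else if p.1 = 1 then single (0, p.2 + 1) 1 else
    if p.1 = 2 then single (0, p.2 + 1) 1 + single (1, p.2 + 1) 1 else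
      single (0, p.2 + 1) 1 + single (1, p.2 + 1) 1 + single (2, p.2 + 1) 1
  else if p.1 = 3 then single (0, p.2 + 1) 1 else 0
noncomputable def bd : E (ZMod 4 × ℕ) := mk bdf
noncomputable def bs : E (ZMod 4 × ℕ) := mk bsf
noncomputable def be : E (ZMod 4 × ℕ) := mk fun p => if p.2 = 0 then single (0, 0) 1 else 0
noncomputable def bσ : E (ZMod 4 × ℕ) := mk fun p =>
  if p.2 % 2 = 0 then single p 1 else -single p 1
noncomputable def bN : E (ZMod 4 × ℕ) := mk fun p => (p.2 : ℤ) • single p 1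

lemma bN_single (h : ZMod 4) (q : ℕ) : bN (single (h, q) 1) = (q : ℤ) • single (h, q) 1 := by
  rw [bN, mk_single, one_smul]
lemma bd_zero (h : ZMod 4) : bd (single (h, 0) 1) = 0 := by simp [bd, bdf]
lemma bd_succ (h : ZMod 4) (q : ℕ) : bd (single (h, q + 1) 1) =
    if q % 2 = 0 then single (h + 1, q) 1 - single (h, q) 1
      else single (h, q) 1 + single (h + 1, q) 1 + single (h + 2, q) 1 + single (h + 3, q) 1 := by
  simp [bd, bdf]
lemma bd_one (h : ZMod 4) : bd (single (h, 1) 1) = single (h + 1, 0) 1 - single (h, 0) 1 := by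
  simpa using bd_succ h 0

set_option maxHeartbeats 2000000 in
theorem per_ax : Ax bd bs be bσ bN := by
  have e0 : ∀ m : ℕ, 2 * m % 2 = 0 := fun m => by omega
  have e1 : ∀ m : ℕ, (2 * m + 1) % 2 = 1 := fun m => by omega
  have e2 : ∀ m : ℕ, (2 * m + 1 + 1) % 2 = 0 := fun m => by omega
  have e3 : ∀ m : ℕ, (2 * m + 1 + 1 + 1) % 2 = 1 := fun m => by omega
  have e4 : ∀ m : ℕ, (2 * m + 1 + 1 + 1 + 1) % 2 = 0 := fun m => by omega
  have f1 : (1 : ZMod 4) + 1 = 2 := rfl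
  have f2 : (1 : ZMod 4) + 2 = 3 := rfl
  have f3 : (1 : ZMod 4) + 3 = 0 := rfl
  have f4 : (2 : ZMod 4) + 1 = 3 := rfl
  have f5 : (2 : ZMod 4) + 2 = 0 := rfl
  have f6 : (2 : ZMod 4) + 3 = 1 := rfl
  have f7 : (3 : ZMod 4) + 1 = 0 := rfl
  have f8 : (3 : ZMod 4) + 2 = 1 := rfl
  have f9 : (3 : ZMod 4) + 3 = 2 := rfl
  have g1 : (1 : ZMod 4) ≠ 0 := by decide
  have g2 : (2 : ZMod 4) ≠ 0 := by decide
  have g3 : (3 : ZMod 4) ≠ 0 := by decide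
  have g4 : (2 : ZMod 4) ≠ 1 := by decide
  have g5 : (3 : ZMod 4) ≠ 1 := by decide
  have g6 : (3 : ZMod 4) ≠ 2 := by decide
  have g7 : (0 : ZMod 4) ≠ 3 := by decide
  have g8 : (1 : ZMod 4) ≠ 3 := by decide
  have g9 : (2 : ZMod 4) ≠ 3 := by decide
  constructor
  case Nd =>
    apply ext1
    rintro ⟨h, _ | q⟩
    · simp [bd_zero, bN_single]
    · simp only [Module.End.mul_apply, LinearMap.sub_apply, bN_single, map_smul, bd_succ]
      split_ifs <;> simp only [map_sub, map_add, bN_single] <;> push_cast <;> module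
  case Ns =>
    apply ext1
    rintro ⟨h, q⟩
    simp only [Module.End.mul_apply, LinearMap.add_apply, bN_single, map_smul, bs, bsf, mk_single,
      one_smul]
    split_ifs <;> simp only [map_zero, map_add, bN_single] <;> push_cast <;> module
  case eN =>
    apply ext1
    rintro ⟨h, q⟩
    simp only [Module.End.mul_apply, bN_single, map_smul, be, mk_single, one_smul]
    split_ifs with hq
    · simp [hq]
    · simp
  case Nσ =>
    apply ext1
    rintro ⟨h, q⟩
    simp only [Module.End.mul_apply, bN_single, map_smul, bσ, mk_single, one_smul]
    split_ifs <;> simp only [map_neg, bN_single] <;> module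
  all_goals apply ext1
  all_goals rintro ⟨h, q⟩
  all_goals
    obtain rfl | rfl | ⟨m, rfl | rfl⟩ : q = 0 ∨ q = 1 ∨ ∃ m, q = 2 * m + 1 + 1 ∨ q = 2 * m + 1 + 1 + 1 := by
      rcases q with _ | _ | q
      · exact Or.inl rfl
      · exact Or.inr (Or.inl rfl)
      · obtain ⟨m, hm | hm⟩ := Nat.even_or_odd' q
        · exact Or.inr (Or.inr ⟨m, Or.inl (by omega)⟩)
        · exact Or.inr (Or.inr ⟨m, Or.inr (by omega)⟩)
  all_goals
    obtain rfl | rfl | rfl | rfl : h = 0 ∨ h = 1 ∨ h = 2 ∨ h = 3 := by revert h; decide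
  all_goals
    simp [bd_zero, bd_one, bd_succ, bs, bsf, be, bσ, bN_single, mk_single, e0, e1, e2, e3, e4, f1, f2, f3, f4, f5, f6, f7, f8, f9,
      g1, g2, g3, g4, g5, g6, g7, g8, g9,
      -zsmul_eq_mul, -smul_eq_mul]
  all_goals try abel1
  all_goals try module
end Contr

set_option linter.unusedSimpArgs false
namespace Contr
open Finsupp

/-- The plane. -/
abbrev P2 := ℤ × ℤ
/-- The plane times the periodic complex. -/
abbrev P3 := P2 × (ZMod 4 × ℕ)
/-- Three dimensions times the periodic complex. -/
abbrev P4 := ℤ × P3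
/-- All cells. -/
abbrev Cell := ℤ × P4

section
variable (X Y : Type)
noncomputable def pd (d σ : E X) (d' : E Y) : E (X × Y) := Lh X Y d + Lh X Y σ * Rh X Y d'
noncomputable def pp (e : E X) (e' : E Y) : E (X × Y) := Lh X Y e * Rh X Y e'
noncomputable def pn (e : E X) (e' : E Y) : E (X × Y) := Lh X Y e + Rh X Y e'
end

theorem Ax.prod' {X Y : Type} {d s e σ N : E X} {d' s' e' σ' N' : E Y}
    (a : Ax d s e σ N) (b : Ax d' s' e' σ' N') :
    Ax (pd X Y d σ d') (pd X Y s e s') (pp X Y e e') (pp X Y σ σ') (pn X Y N N') :=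
  Ax.prod (Lh X Y) (Rh X Y) (LR_comm X Y) a b

noncomputable def d2 : E P2 := pd ℤ ℤ ld lσ ld
noncomputable def s2 : E P2 := pd ℤ ℤ ls le ls
noncomputable def e2 : E P2 := pp ℤ ℤ le le
noncomputable def σ2 : E P2 := pp ℤ ℤ lσ lσ
noncomputable def N2 : E P2 := pn ℤ ℤ lN lN
theorem ax2 : Ax d2 s2 e2 σ2 N2 := line_ax.prod' line_ax
noncomputable def d3 : E P3 := pd _ _ d2 σ2 bd
noncomputable def s3 : E P3 := pd _ _ s2 e2 bs
noncomputable def e3 : E P3 := pp _ _ e2 be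
noncomputable def σ3 : E P3 := pp _ _ σ2 bσ
noncomputable def N3 : E P3 := pn _ _ N2 bN
theorem ax3 : Ax d3 s3 e3 σ3 N3 := ax2.prod' per_ax
noncomputable def d4 : E P4 := pd _ _ ld lσ d3
noncomputable def s4 : E P4 := pd _ _ ls le s3
noncomputable def e4 : E P4 := pp _ _ le e3
noncomputable def σ4 : E P4 := pp _ _ lσ σ3
noncomputable def N4 : E P4 := pn _ _ lN N3
theorem ax4 : Ax d4 s4 e4 σ4 N4 := line_ax.prod' ax3
noncomputable def d5 : E Cell := pd _ _ ld lσ d4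
noncomputable def s5 : E Cell := pd _ _ ls le s4
noncomputable def e5 : E Cell := pp _ _ le e4
noncomputable def σ5 : E Cell := pp _ _ lσ σ4
noncomputable def N5 : E Cell := pn _ _ lN N4
theorem ax5 : Ax d5 s5 e5 σ5 N5 := line_ax.prod' ax4

/-- Compatibility of an endomorphism with the structure. -/
structure Cm {A : Type*} [Ring A] (f d e σ N : A) : Prop where
  d : f * d = d * f
  e : e * f = e
  σ : f * σ = σ * f
  N : f * N = N * f

lemma Cm.one {A : Type*} [Ring A] (d e σ N : A) : Cm 1 d e σ N := by
  constructor <;> simp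

theorem Cm.prod {X Y : Type} {f d e σ N : E X} {f' d' e' σ' N' : E Y}
    (a : Cm f d e σ N) (b : Cm f' d' e' σ' N') :
    Cm (pp X Y f f') (pd X Y d σ d') (pp X Y e e') (pp X Y σ σ') (pn X Y N N') := by
  have hc := LR_comm X Y
  unfold pd pp pn
  set L := Lh X Y
  set R := Rh X Y
  have m1 : ∀ x y x' y', (L x * R y) * (L x' * R y') = L (x * x') * R (y * y') := by
    intro x y x' y'
    rw [mul_assoc, ← mul_assoc (R y), hc, map_mul, map_mul]; simp only [mul_assoc]
  have m2 : ∀ x x' y', L x * (L x' * R y') = L (x * x') * R y' := by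
    intro x x' y'
    rw [map_mul, mul_assoc]
  have m3 : ∀ x y x', (L x * R y) * L x' = L (x * x') * R y := by
    intro x y x'
    rw [map_mul, mul_assoc, hc, mul_assoc]
  have m4 : ∀ x y y', (L x * R y) * R y' = L x * R (y * y') := by
    intro x y y'
    rw [map_mul, mul_assoc]
  have m5 : ∀ y x' y', R y * (L x' * R y') = L x' * R (y * y') := by
    intro x x' y'
    rw [map_mul, ← mul_assoc, hc, mul_assoc]
  constructor <;>
  simp only [add_mul, mul_add, m1, m2, m3, m4, m5, a.d, a.e, a.σ, a.N, b.d, b.e, b.σ, b.N]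

lemma Lh_single' {X Y : Type} {f : E X} {x x' : X} {a : ℤ} (y : Y)
    (h : f (single x 1) = single x' a) :
    Lh X Y f (single (x, y) 1) = single (x', y) a := by
  rw [Lh_single, h, mapDomain_single]

lemma pp_single {X Y : Type} {f : E X} {g : E Y} {x x' : X} {y y' : Y} {a b : ℤ}
    (h : f (single x 1) = single x' a) (h' : g (single y 1) = single y' b) :
    pp X Y f g (single (x, y) 1) = single (x', y') (a * b) := by
  rw [pp, Module.End.mul_apply, Rh_single, h', mapDomain_single,
    show (single (x, y') b : W (X × Y)) = b • single (x, y') 1 by simp, map_smul,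
    Lh_single' y' h]
  simp [mul_comm]

/-- Translation of the line by an even number. -/
noncomputable def tr (m : ℤ) : E ℤ := mk fun c => single (c + 2 * m) 1
/-- Sign of the reflection. -/
def rS (c : ℤ) : ℤ := if c % 2 = 0 then 1 else -1
/-- Reflection of the line. -/
noncomputable def rf : E ℤ := mk fun c => single (-c) (rS c)
/-- Sign of the rotation. -/
def qS (c d : ℤ) : ℤ := if c % 2 = 0 then (if d % 2 = 0 then 1 else -1) else 1
/-- Rotation of the plane. -/
noncomputable def rt : E P2 := mk fun c => single (-c.2, c.1) (qS c.1 c.2)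
/-- Shift of the periodic complex. -/
noncomputable def sh : E (ZMod 4 × ℕ) := mk fun p => single (p.1 + 1, p.2) 1

lemma tr_cm (m : ℤ) : Cm (tr m) ld le lσ lN := by
  constructor <;> apply ext1 <;> intro c <;> obtain ⟨n, rfl | rfl⟩ := Int.even_or_odd' c
  all_goals
    have h1 : 2 * n + 2 * m = 2 * (n + m) := by ring
    have h2 : 2 * n + 1 + 2 * m = 2 * (n + m) + 1 := by ring
    have h3 : 2 * (n + 1) + 2 * m = 2 * (n + m + 1) := by ring
    simp only [Module.End.mul_apply, ld_even, ld_odd, le_even, le_odd, lσ_even, lσ_odd, lN_even,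
      lN_odd, map_sub, map_neg, map_zero, tr, mk_single, one_smul, h1, h2, h3]

lemma rf_even (n : ℤ) : rf (single (2 * n) 1) = single (2 * -n) 1 := by
  simp [rf, rS]
lemma rf_odd (n : ℤ) : rf (single (2 * n + 1) 1) = -single (2 * (-n - 1) + 1) 1 := by
  have : -(2 * n + 1) = 2 * (-n - 1) + 1 := by ring
  simp [rf, rS, this]

lemma rf_cm : Cm rf ld le lσ lN := by
  constructor <;> apply ext1 <;> intro c <;> obtain ⟨n, rfl | rfl⟩ := Int.even_or_odd' c
  all_goals
    have h1 : (-(n + 1)) = -n - 1 := by ring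
    simp only [Module.End.mul_apply, ld_even, ld_odd, le_even, le_odd, lσ_even, lσ_odd, lN_even,
      lN_odd, map_sub, map_neg, map_zero, rf_even, rf_odd, sub_add_cancel, neg_sub, neg_neg, h1,
      neg_zero]

lemma sh_cm : Cm sh bd be bσ bN := by
  constructor
  case d =>
    apply ext1
    rintro ⟨h, _ | q⟩
    · simp [bd_zero, sh]
    · simp only [Module.End.mul_apply, sh, mk_single, one_smul, bd_succ]
      split_ifs <;> simp only [map_sub, map_add, mk_single, one_smul] <;>
        simp only [add_assoc, add_comm (1 : ZMod 4)]
  case e =>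
    apply ext1
    rintro ⟨h, q⟩
    simp only [Module.End.mul_apply, sh, be, mk_single, one_smul]
  case σ =>
    apply ext1
    rintro ⟨h, q⟩
    simp only [Module.End.mul_apply, sh, bσ, mk_single, one_smul]
    split_ifs <;> simp
  case N =>
    apply ext1
    rintro ⟨h, q⟩
    simp only [Module.End.mul_apply, sh, bN, mk_single, one_smul, map_smul]

lemma md_neg {X Y : Type} (f : X → Y) (x : W X) : mapDomain f (-x) = -mapDomain f x :=
  map_neg (mapDomain.addMonoidHom f) x
lemma md_sub {X Y : Type} (f : X → Y) (x y : W X) :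
    mapDomain f (x - y) = mapDomain f x - mapDomain f y :=
  map_sub (mapDomain.addMonoidHom f) x y

lemma d2_ee (n m : ℤ) : d2 (single (2 * n, 2 * m) 1) = 0 := by
  simp [d2, pd, Lh_single, Rh_single, ld_even]
lemma d2_oe (n m : ℤ) : d2 (single (2 * n + 1, 2 * m) 1) =
    single (2 * (n + 1), 2 * m) 1 - single (2 * n, 2 * m) 1 := by
  simp [d2, pd, Lh_single, Rh_single, ld_even, ld_odd, md_sub, mapDomain_single]
lemma d2_eo (n m : ℤ) : d2 (single (2 * n, 2 * m + 1) 1) =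
    single (2 * n, 2 * (m + 1)) 1 - single (2 * n, 2 * m) 1 := by
  simp [d2, pd, Lh_single, Rh_single, ld_even, ld_odd, md_sub, mapDomain_single, lσ_even]
lemma d2_oo (n m : ℤ) : d2 (single (2 * n + 1, 2 * m + 1) 1) =
    single (2 * (n + 1), 2 * m + 1) 1 - single (2 * n, 2 * m + 1) 1 -
    (single (2 * n + 1, 2 * (m + 1)) 1 - single (2 * n + 1, 2 * m) 1) := by
  simp [d2, pd, Lh_single, Rh_single, ld_even, ld_odd, md_sub, md_neg, mapDomain_single, lσ_odd]
  abel
lemma e2_ee (n m : ℤ) : e2 (single (2 * n, 2 * m) 1) = single (0, 0) 1 := by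
  simp [e2, pp, Lh_single, Rh_single, le_even, le_odd, mapDomain_single, le_zero]
lemma e2_oe (n m : ℤ) : e2 (single (2 * n + 1, m) 1) = 0 := by
  obtain ⟨m, rfl | rfl⟩ := Int.even_or_odd' m <;>
  simp [e2, pp, Lh_single, Rh_single, le_even, le_odd, mapDomain_single, le_zero]
lemma e2_eo (n m : ℤ) : e2 (single (n, 2 * m + 1) 1) = 0 := by
  simp [e2, pp, Lh_single, Rh_single, le_even, le_odd, mapDomain_single, le_zero]
lemma sgn2_ee (n m : ℤ) : σ2 (single (2 * n, 2 * m) 1) = single (2 * n, 2 * m) 1 := by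
  simp [σ2, pp, Lh_single, Rh_single, lσ_even, lσ_odd, mapDomain_single]
lemma sgn2_oe (n m : ℤ) : σ2 (single (2 * n + 1, 2 * m) 1) = -single (2 * n + 1, 2 * m) 1 := by
  simp [σ2, pp, Lh_single, Rh_single, lσ_even, lσ_odd, mapDomain_single, md_neg]
lemma sgn2_eo (n m : ℤ) : σ2 (single (2 * n, 2 * m + 1) 1) = -single (2 * n, 2 * m + 1) 1 := by
  simp [σ2, pp, Lh_single, Rh_single, lσ_even, lσ_odd, mapDomain_single, md_neg]
lemma sgn2_oo (n m : ℤ) : σ2 (single (2 * n + 1, 2 * m + 1) 1) =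
    single (2 * n + 1, 2 * m + 1) 1 := by
  simp [σ2, pp, Lh_single, Rh_single, lσ_even, lσ_odd, mapDomain_single, md_neg]
lemma N2_ee (n m : ℤ) : N2 (single (2 * n, 2 * m) 1) = 0 := by
  simp [N2, pn, Lh_single, Rh_single, lN_even, lN_odd, mapDomain_single]
lemma N2_oe (n m : ℤ) : N2 (single (2 * n + 1, 2 * m) 1) = single (2 * n + 1, 2 * m) 1 := by
  simp [N2, pn, Lh_single, Rh_single, lN_even, lN_odd, mapDomain_single]
lemma N2_eo (n m : ℤ) : N2 (single (2 * n, 2 * m + 1) 1) = single (2 * n, 2 * m + 1) 1 := by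
  simp [N2, pn, Lh_single, Rh_single, lN_even, lN_odd, mapDomain_single]
lemma N2_oo (n m : ℤ) : N2 (single (2 * n + 1, 2 * m + 1) 1) =
    single (2 * n + 1, 2 * m + 1) 1 + single (2 * n + 1, 2 * m + 1) 1 := by
  simp only [N2, pn, LinearMap.add_apply, Lh_single, Rh_single, lN_even, lN_odd, mapDomain_single]
lemma rt_ee (n m : ℤ) : rt (single (2 * n, 2 * m) 1) = single (2 * -m, 2 * n) 1 := by
  simp [rt, qS]
lemma rt_oe (n m : ℤ) : rt (single (2 * n + 1, 2 * m) 1) = single (2 * -m, 2 * n + 1) 1 := by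
  simp [rt, qS]
lemma rt_eo (n m : ℤ) : rt (single (2 * n, 2 * m + 1) 1) =
    -single (2 * (-m - 1) + 1, 2 * n) 1 := by
  have : -(2 * m + 1) = 2 * (-m - 1) + 1 := by ring
  simp [rt, qS, this]
lemma rt_oo (n m : ℤ) : rt (single (2 * n + 1, 2 * m + 1) 1) =
    single (2 * (-m - 1) + 1, 2 * n + 1) 1 := by
  have : -(2 * m + 1) = 2 * (-m - 1) + 1 := by ring
  simp [rt, qS, this]

lemma rt_cm : Cm rt d2 e2 σ2 N2 := by
  have o3 : ∀ n : ℤ, -n - 1 + 1 = -n := fun n => by ring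
  have o4 : ∀ n : ℤ, -(n + 1) = -n - 1 := fun n => by ring
  constructor <;> apply ext1 <;> rintro ⟨c, c'⟩ <;>
  obtain ⟨n, rfl | rfl⟩ := Int.even_or_odd' c <;>
  obtain ⟨m, rfl | rfl⟩ := Int.even_or_odd' c'
  all_goals
    simp only [Module.End.mul_apply, d2_ee, d2_eo, d2_oe, d2_oo, e2_ee, e2_eo, e2_oe, sgn2_ee, sgn2_eo,
      sgn2_oe, sgn2_oo, N2_ee, N2_eo, N2_oe, N2_oo, rt_ee, rt_eo, rt_oe, rt_oo,
      map_sub, map_neg, map_zero, map_add, o3, o4]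
  all_goals try abel1

/-- Degree of a cell. -/
def cdeg : Cell → ℕ := fun c =>
  (c.1 % 2).toNat + (c.2.1 % 2).toNat + (c.2.2.1.1 % 2).toNat + (c.2.2.1.2 % 2).toNat + c.2.2.2.2

lemma lN_single (c : ℤ) : lN (single c 1) = ((c % 2).toNat : ℤ) • single c 1 := by
  obtain ⟨n, rfl | rfl⟩ := Int.even_or_odd' c
  · rw [lN_even, show (2 * n) % 2 = 0 by omega]; simp
  · rw [lN_odd, show (2 * n + 1) % 2 = 1 by omega]; simp

lemma pn_single {X Y : Type} {f : E X} {g : E Y} {x : X} {y : Y} {a b : ℤ}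
    (h : f (single x 1) = a • single x 1) (h' : g (single y 1) = b • single y 1) :
    pn X Y f g (single (x, y) 1) = (a + b) • single (x, y) 1 := by
  rw [pn, LinearMap.add_apply, Rh_single, Lh_single, h, h', mapDomain_smul, mapDomain_smul,
    mapDomain_single, mapDomain_single, add_smul]

lemma N5_single (c : Cell) : N5 (single c 1) = (cdeg c : ℤ) • single c 1 := by
  obtain ⟨c0, c1, ⟨c2, c3⟩, h, q⟩ := c
  have := pn_single (lN_single c0) (pn_single (lN_single c1)
    (pn_single (pn_single (lN_single c2) (lN_single c3)) (bN_single h q)))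
  refine Eq.trans this ?_
  congr 1
  simp only [cdeg]
  push_cast
  ring

lemma N5_apply (x : W Cell) (c : Cell) : N5 x c = (cdeg c : ℤ) * x c := by
  induction x using Finsupp.induction_linear with
  | zero => simp
  | add a b ha hb => rw [map_add, Finsupp.add_apply, ha, hb, Finsupp.add_apply, mul_add]
  | single a b =>
    rw [show (single a b : W Cell) = b • single a 1 by simp, map_smul, N5_single]
    by_cases h : a = c
    · subst h; simp [mul_comm]
    · simp [Finsupp.single_apply, h]

/-- Base cell. -/
def c0 : Cell := (0, 0, (0, 0), (0, 0))

/-- Augmentation. -/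
noncomputable def eps : W Cell →ₗ[ℤ] ℤ :=
  Finsupp.linearCombination ℤ (fun c => if cdeg c = 0 then (1 : ℤ) else 0)

lemma le_single (c : ℤ) : le (single c 1) = single 0 (if (c % 2).toNat = 0 then 1 else 0) := by
  obtain ⟨n, rfl | rfl⟩ := Int.even_or_odd' c
  · rw [le_even, show (2 * n) % 2 = 0 by omega]; simp
  · rw [le_odd, show (2 * n + 1) % 2 = 1 by omega]; simp
lemma be_single (h : ZMod 4) (q : ℕ) :
    be (single (h, q) 1) = single (0, 0) (if q = 0 then 1 else 0) := by
  simp only [be, mk_single, one_smul]; split_ifs <;> simp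

lemma e5_single (c : Cell) : e5 (single c 1) = eps (single c 1) • single c0 1 := by
  obtain ⟨x0, x1, ⟨x2, x3⟩, h, q⟩ := c
  have := pp_single (le_single x0) (pp_single (le_single x1)
    (pp_single (pp_single (le_single x2) (le_single x3)) (be_single h q)))
  refine Eq.trans this ?_
  simp only [eps, linearCombination_single, one_smul, cdeg, Finsupp.smul_single, smul_eq_mul, mul_one, c0]
  congr 1
  by_cases h1 : (x0 % 2).toNat = 0 <;> by_cases h2 : (x1 % 2).toNat = 0 <;>
    by_cases h3 : (x2 % 2).toNat = 0 <;> by_cases h4 : (x3 % 2).toNat = 0 <;>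
    by_cases h5 : q = 0 <;>
    simp only [h1, h2, h3, h4, h5, if_true, if_false, mul_one, mul_zero, zero_mul, add_eq_zero,
      and_true, and_false, false_and, true_and, one_mul]

lemma e5_apply (x : W Cell) : e5 x = eps x • single c0 1 := by
  induction x using Finsupp.induction_linear with
  | zero => simp
  | add a b ha hb => rw [map_add, ha, hb, map_add, add_smul]
  | single a b =>
    rw [show (single a b : W Cell) = b • single a 1 by simp, map_smul, map_smul, e5_single,
      smul_assoc]

end Contr

set_option linter.unusedSimpArgs false
namespace Contr
open Finsupp

lemma Cm.mul {A : Type*} [Ring A] {f g d e σ N : A} (a : Cm f d e σ N) (b : Cm g d e σ N) :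
    Cm (f * g) d e σ N where
  d := by rw [mul_assoc, b.d, ← mul_assoc, a.d, mul_assoc]
  e := by rw [← mul_assoc, a.e, b.e]
  σ := by rw [mul_assoc, b.σ, ← mul_assoc, a.σ, mul_assoc]
  N := by rw [mul_assoc, b.N, ← mul_assoc, a.N, mul_assoc]

lemma Cm.pow {A : Type*} [Ring A] {f d e σ N : A} (a : Cm f d e σ N) (n : ℕ) :
    Cm (f ^ n) d e σ N := by
  induction n with
  | zero => rw [pow_zero]; exact Cm.one _ _ _ _
  | succ n ih => rw [pow_succ]; exact ih.mul a

/-- Translations. -/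
noncomputable def T (l : Fin 4 → ℤ) : E Cell :=
  pp _ _ (tr (l 0)) (pp _ _ (tr (l 1 + l 2 - l 3))
    (pp _ _ (pp _ _ (tr (l 1 + l 3)) (tr (l 2))) 1))
/-- The generator of the point group. -/
noncomputable def R : E Cell := pp _ _ rf (pp _ _ 1 (pp _ _ rt sh))

lemma T_cm (l : Fin 4 → ℤ) : Cm (T l) d5 e5 σ5 N5 :=
  (tr_cm _).prod ((tr_cm _).prod (((tr_cm _).prod (tr_cm _)).prod (Cm.one _ _ _ _)))
lemma R_cm : Cm R d5 e5 σ5 N5 :=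
  rf_cm.prod ((Cm.one _ _ _ _).prod (rt_cm.prod sh_cm))

/-- Translation on cells. -/
def tc (l : Fin 4 → ℤ) (c : Cell) : Cell :=
  (c.1 + 2 * l 0, c.2.1 + 2 * (l 1 + l 2 - l 3),
    (c.2.2.1.1 + 2 * (l 1 + l 3), c.2.2.1.2 + 2 * l 2), c.2.2.2)
/-- The generator on cells. -/
def rc (c : Cell) : Cell :=
  (-c.1, c.2.1, (-c.2.2.1.2, c.2.2.1.1), (c.2.2.2.1 + 1, c.2.2.2.2))
/-- Its sign. -/
def rsg (c : Cell) : ℤ := rS c.1 * qS c.2.2.1.1 c.2.2.1.2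

lemma T_single (l : Fin 4 → ℤ) (c : Cell) : T l (single c 1) = single (tc l c) 1 := by
  obtain ⟨x0, x1, ⟨x2, x3⟩, h, q⟩ := c
  have ht : ∀ m x, tr m (single x 1) = single (x + 2 * m) 1 := fun m x => by simp [tr]
  have := pp_single (ht (l 0) x0) (pp_single (ht (l 1 + l 2 - l 3) x1)
    (pp_single (pp_single (ht (l 1 + l 3) x2) (ht (l 2) x3))
      (show (1 : E (ZMod 4 × ℕ)) (single (h, q) 1) = single (h, q) 1 from rfl)))
  exact Eq.trans this (by simp [tc])

lemma R_single (c : Cell) : R (single c 1) = single (rc c) (rsg c) := by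
  obtain ⟨x0, x1, ⟨x2, x3⟩, h, q⟩ := c
  have h1 : rf (single x0 1) = single (-x0) (rS x0) := by simp [rf]
  have h2 : rt (single (x2, x3) 1) = single (-x3, x2) (qS x2 x3) := by simp [rt]
  have h3 : sh (single (h, q) 1) = single (h + 1, q) 1 := by simp [sh]
  have := pp_single h1 (pp_single
      (show (1 : E ℤ) (single x1 1) = single x1 1 from rfl) (pp_single h2 h3))
  exact Eq.trans this (by simp [rc, rsg])

lemma single_smul1 {X : Type} (x : X) (a : ℤ) : (single x a : W X) = a • single x 1 := by simp

lemma T_add (l m : Fin 4 → ℤ) : T (l + m) = T l * T m := by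
  apply ext1
  intro c
  rw [Module.End.mul_apply, T_single, T_single, T_single]
  congr 1
  simp only [tc, Pi.add_apply, Prod.mk.injEq]
  refine ⟨?_, ?_, ⟨?_, ?_⟩, trivial⟩ <;> ring

lemma T_zero : T 0 = 1 := by
  apply ext1
  intro c
  rw [T_single]
  simp [tc]

lemma rS_neg (c : ℤ) : rS (-c) = rS c := by
  unfold rS; rw [show (-c) % 2 = c % 2 by omega]
lemma rS_sq (c : ℤ) : rS c * rS c = 1 := by unfold rS; split_ifs <;> rfl
lemma rS_add (c m : ℤ) : rS (c + 2 * m) = rS c := by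
  unfold rS; rw [show (c + 2 * m) % 2 = c % 2 by omega]
lemma qS_add (c d m n : ℤ) : qS (c + 2 * m) (d + 2 * n) = qS c d := by
  unfold qS; rw [show (c + 2 * m) % 2 = c % 2 by omega, show (d + 2 * n) % 2 = d % 2 by omega]
lemma qS_negl (c d : ℤ) : qS (-c) d = qS c d := by
  unfold qS; rw [show (-c) % 2 = c % 2 by omega]
lemma qS_negr (c d : ℤ) : qS c (-d) = qS c d := by
  unfold qS; rw [show (-d) % 2 = d % 2 by omega]
lemma qS_swap (c d : ℤ) : qS c d * qS d c * (qS c d * qS d c) = 1 := by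
  unfold qS; split_ifs <;> rfl
lemma qS_sq (c d : ℤ) : qS c d * qS c d = 1 := by
  unfold qS; split_ifs <;> rfl
lemma rsg_sq (c : Cell) : rsg c * rsg c = 1 := by
  unfold rsg; rw [mul_mul_mul_comm, rS_sq, qS_sq, mul_one]

lemma rsg_tc (l : Fin 4 → ℤ) (c : Cell) : rsg (tc l c) = rsg c := by
  simp only [rsg, tc, rS_add, qS_add]

lemma rc_tc (l : Fin 4 → ℤ) (c : Cell) : rc (tc l c) = tc (holM.mulVec l) (rc c) := by
  simp only [rc, tc, Prod.mk.injEq]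
  simp [holM, Matrix.mulVec, dotProduct, Fin.sum_univ_four]
  refine ⟨by ring, by ring, by ring⟩

lemma R_T (l : Fin 4 → ℤ) : R * T l = T (holM.mulVec l) * R := by
  apply ext1
  intro c
  rw [Module.End.mul_apply, Module.End.mul_apply, T_single, R_single, R_single,
    single_smul1 _ (rsg c), map_smul, T_single, rsg_tc, rc_tc, single_smul1 _ (rsg c)]

/-- Sign of a power of the generator. -/
def rsk : ℕ → Cell → ℤ
  | 0, _ => 1
  | k + 1, c => rsk k c * rsg (rc^[k] c)

lemma Rpow_single (k : ℕ) (c : Cell) : (R ^ k) (single c 1) = single (rc^[k] c) (rsk k c) := by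
  induction k with
  | zero => simp [rsk]
  | succ k ih =>
    rw [pow_succ', Module.End.mul_apply, ih, single_smul1, map_smul, R_single,
      Function.iterate_succ_apply']
    simp [rsk]

lemma rc4 (c : Cell) : rc^[4] c = c := by
  obtain ⟨x0, x1, ⟨x2, x3⟩, h, q⟩ := c
  simp [rc, add_assoc]
  decide

lemma rsk4 (c : Cell) : rsk 4 c = 1 := by
  obtain ⟨x0, x1, ⟨x2, x3⟩, h, q⟩ := c
  simp only [rsk, Function.iterate_succ_apply, Function.iterate_zero_apply, rc, rsg, rS_neg,
    qS_negl, qS_negr, one_mul]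
  have h1 := rS_sq x0
  have h2 := qS_swap x2 x3
  calc _ = (rS x0 * rS x0) * (rS x0 * rS x0) * (qS x2 x3 * qS x3 x2 * (qS x2 x3 * qS x3 x2)) := by
        ring
    _ = 1 := by rw [h1, h2]; rfl

lemma R4 : R ^ 4 = 1 := by
  apply ext1
  intro c
  rw [Rpow_single, rc4, rsk4]
  rfl

/-- The group. -/
abbrev Gam := Crystal.Crys 4 holM holM_pow

/-- The generating automorphism. -/
def alp : MulAut (Crystal.Lat 4) := Crystal.glToAut 4 (Crystal.matUnit holM (4 - 1)
  (by rw [show 4 - 1 + 1 = 4 from rfl]; exact holM_pow))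

lemma alp_apply (l : Crystal.Lat 4) :
    alp l = Multiplicative.ofAdd (holM.mulVec l.toAdd) := rfl

lemma Rk_T (k : ℕ) (l : Crystal.Lat 4) :
    R ^ k * T l.toAdd = T ((alp ^ k) l).toAdd * R ^ k := by
  induction k with
  | zero => simp
  | succ k ih =>
    rw [pow_succ', mul_assoc, ih, ← mul_assoc, R_T, pow_succ' alp, MulAut.mul_apply, alp_apply,
      mul_assoc]
    rfl

/-- The action of the group on all chains. -/
noncomputable def act : Gam →* E Cell where
  toFun g := T g.left.toAdd * R ^ g.right.toAdd.val
  map_one' := by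
    change T 0 * R ^ 0 = 1
    rw [T_zero, pow_zero, mul_one]
  map_mul' g g' := by
    change T (g.left.toAdd + ((alp ^ g.right.toAdd.val) g'.left).toAdd) *
      R ^ (g.right.toAdd + g'.right.toAdd).val = _
    rw [ZMod.val_add, ← pow_eq_pow_mod _ R4, T_add, pow_add]
    simp only [mul_assoc]
    rw [← mul_assoc (R ^ _) (T _), Rk_T]
    simp only [mul_assoc]

lemma act_cm (g : Gam) : Cm (act g) d5 e5 σ5 N5 := (T_cm _).mul (R_cm.pow _)

/-- Permutation of cells. -/
def pc (g : Gam) (c : Cell) : Cell := tc g.left.toAdd (rc^[g.right.toAdd.val] c)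
/-- Sign. -/
def ps (g : Gam) (c : Cell) : ℤ := rsk g.right.toAdd.val c

lemma act_single (g : Gam) (c : Cell) : act g (single c 1) = single (pc g c) (ps g c) := by
  change (T _ * R ^ _) (single c 1) = _
  rw [Module.End.mul_apply, Rpow_single, single_smul1, map_smul, T_single]
  simp [pc, ps]

lemma rsk_unit (k : ℕ) (c : Cell) : IsUnit (rsk k c) := by
  induction k with
  | zero => simp [rsk]
  | succ k ih => exact ih.mul (IsUnit.of_mul_eq_one _ (rsg_sq _))

end Contr

set_option linter.unusedSimpArgs false
namespace Contr
open Finsupp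

/-- Chains of degree `n`. -/
def Vn (n : ℕ) : Submodule ℤ (W Cell) := Finsupp.supported ℤ ℤ {c | cdeg c = n}

lemma mem_Vn (n : ℕ) (x : W Cell) : x ∈ Vn n ↔ N5 x = (n : ℤ) • x := by
  rw [Vn, Finsupp.mem_supported']
  constructor
  · intro h
    ext c
    rw [N5_apply, Finsupp.smul_apply, smul_eq_mul]
    by_cases hc : cdeg c = n
    · rw [hc]
    · rw [h c hc]; simp
  · intro h c hc
    have := DFunLike.congr_fun h c
    rw [N5_apply, Finsupp.smul_apply, smul_eq_mul] at this
    have h2 : ((cdeg c : ℤ) - n) * x c = 0 := by rw [sub_mul, this, sub_self]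
    rcases mul_eq_zero.1 h2 with h3 | h3
    · exact absurd (by exact_mod_cast (sub_eq_zero.1 h3)) hc
    · exact h3

lemma eq_ap {X : Type} {f g : E X} (h : f = g) (x : W X) : f x = g x := by rw [h]

lemma d_mem (n : ℕ) (x : W Cell) (hx : x ∈ Vn (n + 1)) : d5 x ∈ Vn n := by
  rw [mem_Vn] at *
  have := eq_ap ax5.Nd x
  simp only [Module.End.mul_apply, LinearMap.sub_apply, hx, map_smul] at this
  rw [this]; push_cast; rw [add_smul, one_smul, add_sub_cancel_right]

lemma s_mem (n : ℕ) (x : W Cell) (hx : x ∈ Vn n) : s5 x ∈ Vn (n + 1) := by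
  rw [mem_Vn] at *
  have := eq_ap ax5.Ns x
  simp only [Module.End.mul_apply, LinearMap.add_apply, hx, map_smul] at this
  rw [this]; push_cast; rw [add_smul, one_smul]

lemma act_mem (n : ℕ) (g : Gam) (x : W Cell) (hx : x ∈ Vn n) : act g x ∈ Vn n := by
  rw [mem_Vn] at *
  have := eq_ap (act_cm g).N x
  simp only [Module.End.mul_apply, hx, map_smul] at this
  exact this.symm

lemma d_zero (x : W Cell) (hx : x ∈ Vn 0) : d5 x = 0 := by
  rw [mem_Vn] at hx
  have := eq_ap ax5.Nd x
  simp only [Module.End.mul_apply, LinearMap.sub_apply, hx, map_smul] at this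
  ext c
  have h2 := DFunLike.congr_fun this c
  rw [N5_apply] at h2
  simp at h2
  have h3 : ((cdeg c : ℤ) + 1) * d5 x c = 0 := by rw [add_mul, h2]; ring
  rcases mul_eq_zero.1 h3 with h | h
  · omega
  · exact h

lemma e_pos (n : ℕ) (x : W Cell) (hx : x ∈ Vn (n + 1)) : e5 x = 0 := by
  rw [mem_Vn] at hx
  have := eq_ap ax5.eN x
  simp only [Module.End.mul_apply, hx, map_smul, LinearMap.zero_apply] at this
  rcases smul_eq_zero.1 this with h | h
  · omega
  · exact h

lemma eps_of (x : W Cell) : eps x = e5 x c0 := by rw [e5_apply]; simp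

lemma ds (x : W Cell) (h1 : e5 x = 0) (h2 : d5 x = 0) : d5 (s5 x) = x := by
  have := eq_ap ax5.h x
  simp only [Module.End.mul_apply, LinearMap.sub_apply, h1, h2, map_zero, Module.End.one_apply,
    sub_zero] at this
  exact this

/-- Weight. -/
def wt (i : ℕ) : ℕ := i / 16 % 2 + i / 8 % 2 + i / 4 % 2 + i / 2 % 2

/-- Indices of orbits of cells of degree `n`. -/
abbrev In (n : ℕ) : Type := {i : Fin 32 // wt i ≤ n}

/-- Representatives. -/
def rp (n : ℕ) (i : ℕ) : Cell :=
  (((i / 16 % 2 : ℕ) : ℤ), ((i / 8 % 2 : ℕ) : ℤ) + 2 * ((i % 2 : ℕ) : ℤ),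
    (((i / 4 % 2 : ℕ) : ℤ), ((i / 2 % 2 : ℕ) : ℤ)), (0, n - wt i))

lemma cdeg_rp (n : ℕ) (i : In n) : cdeg (rp n i.1) = n := by
  have := i.2
  simp only [cdeg, rp]
  have h2 : wt i.1 = (i.1 : ℕ) / 16 % 2 + (i.1 : ℕ) / 8 % 2 + (i.1 : ℕ) / 4 % 2 +
    (i.1 : ℕ) / 2 % 2 := rfl
  omega

lemma cdeg_tc (l : Fin 4 → ℤ) (c : Cell) : cdeg (tc l c) = cdeg c := by
  simp only [cdeg, tc, Int.add_mul_emod_self_left]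

lemma cdeg_rc (c : Cell) : cdeg (rc c) = cdeg c := by
  simp only [cdeg, rc, Int.neg_emod_two]
  omega

lemma cdeg_pc (g : Gam) (c : Cell) : cdeg (pc g c) = cdeg c := by
  rw [pc, cdeg_tc]
  generalize g.right.toAdd.val = k
  induction k with
  | zero => rfl
  | succ k ih => rw [Function.iterate_succ_apply', cdeg_rc, ih]

/-- The parametrization of cells. -/
def par (n : ℕ) (p : Gam × In n) : {c : Cell | cdeg c = n} :=
  ⟨pc p.1 (rp n p.2.1), by rw [Set.mem_ofPred_eq, cdeg_pc, cdeg_rp]⟩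

lemma z4 (h : ZMod 4) : h = 0 ∨ h = 1 ∨ h = 2 ∨ h = 3 := by revert h; decide

lemma pc_h (g : Gam) (c : Cell) : (pc g c).2.2.2.1 = c.2.2.2.1 + g.right.toAdd := by
  have : ∀ (k : ℕ) (c : Cell), (rc^[k] c).2.2.2.1 = c.2.2.2.1 + k := by
    intro k c
    induction k with
    | zero => simp
    | succ k ih =>
      rw [Function.iterate_succ_apply']
      change (rc^[k] c).2.2.2.1 + 1 = _
      rw [ih]; push_cast; ring
  change (rc^[_] c).2.2.2.1 = _
  rw [this, ZMod.natCast_zmod_val]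

lemma val2 : (2 : ZMod 4).val = 2 := rfl
lemma val3 : (3 : ZMod 4).val = 3 := rfl
lemma val1 : (1 : ZMod 4).val = 1 := rfl
lemma val0 : (0 : ZMod 4).val = 0 := rfl

lemma bits_eq (a b c d e : ℕ) (ha : a ≤ 1) (hb : b ≤ 1) (hc : c ≤ 1) (hd : d ≤ 1) (he : e ≤ 1) :
    (16 * a + 8 * b + 4 * c + 2 * d + e) / 16 % 2 = a ∧
    (16 * a + 8 * b + 4 * c + 2 * d + e) / 8 % 2 = b ∧
    (16 * a + 8 * b + 4 * c + 2 * d + e) / 4 % 2 = c ∧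
    (16 * a + 8 * b + 4 * c + 2 * d + e) / 2 % 2 = d ∧
    (16 * a + 8 * b + 4 * c + 2 * d + e) % 2 = e ∧
    wt (16 * a + 8 * b + 4 * c + 2 * d + e) = a + b + c + d := by
  unfold wt
  omega

lemma bits (i : ℕ) (hi : i < 32) : ∃ a b c d e : ℕ, a ≤ 1 ∧ b ≤ 1 ∧ c ≤ 1 ∧ d ≤ 1 ∧ e ≤ 1 ∧
    i = 16 * a + 8 * b + 4 * c + 2 * d + e ∧ i / 16 % 2 = a ∧ i / 8 % 2 = b ∧ i / 4 % 2 = c ∧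
    i / 2 % 2 = d ∧ i % 2 = e ∧ wt i = a + b + c + d :=
  ⟨i / 16 % 2, i / 8 % 2, i / 4 % 2, i / 2 % 2, i % 2, by omega, by omega, by omega, by omega,
    by omega, by omega, rfl, rfl, rfl, rfl, rfl, rfl⟩

lemma par_inj (n : ℕ) : Function.Injective (par n) := by
  rintro ⟨⟨l, r⟩, ⟨i, hi⟩⟩ ⟨⟨l', r'⟩, ⟨j, hj⟩⟩ h
  have h1 : pc ⟨l, r⟩ (rp n i) = pc ⟨l', r'⟩ (rp n j) := congrArg Subtype.val h
  have hr : r = r' := by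
    have := congrArg (fun c : Cell => c.2.2.2.1) h1
    simp only [pc_h, rp, zero_add] at this
    exact this
  subst hr
  have key : (∀ t, l.toAdd t = l'.toAdd t) ∧ (i : ℕ) = j := by
    clear h
    change (tc l.toAdd (rc^[r.toAdd.val] (rp n i))) = (tc l'.toAdd (rc^[r.toAdd.val] (rp n j))) at h1
    generalize r.toAdd = r at h1
    generalize l.toAdd = l at h1
    generalize l'.toAdd = l' at h1
    have hi := i.2
    have hj := j.2
    generalize (i : ℕ) = i at *
    generalize (j : ℕ) = j at *
    rw [Fin.forall_fin_succ, Fin.forall_fin_succ, Fin.forall_fin_succ, Fin.forall_fin_one]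
    change (l 0 = l' 0 ∧ l 1 = l' 1 ∧ l 2 = l' 2 ∧ l 3 = l' 3) ∧ _
    rcases z4 r with rfl | rfl | rfl | rfl
    all_goals
      simp only [val0, val1, val2, val3, Function.iterate_succ_apply, Function.iterate_zero_apply,
        tc, rc, rp, Prod.mk.injEq] at h1
      obtain ⟨g0, g1, ⟨g2, g3⟩, -⟩ := h1
      obtain ⟨a, b, c, d, e, ha, hb, hc, hd, he, rfl, w0, w1, w2, w3, w4, w5⟩ := bits i (by omega)
      obtain ⟨a', b', c', d', e', ha', hb', hc', hd', he', rfl, w0', w1', w2', w3', w4', w5'⟩ :=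
        bits j (by omega)
      rw [w0, w0'] at g0
      rw [w1, w1', w4, w4'] at g1
      simp only [w2, w2', w3, w3'] at g2 g3
      clear w0 w1 w2 w3 w4 w0' w1' w2' w3' w4' w5 w5' hi hj
      clear * - g0 g1 g2 g3 ha hb hc hd he ha' hb' hc' hd' he'
      refine ⟨⟨by omega, by omega, by omega, by omega⟩, by omega⟩
  obtain ⟨k1, k2⟩ := key
  have k1 : l = l' := funext k1
  have k2 : i = j := Fin.ext k2
  subst k1 k2
  rfl

lemma par_surj (n : ℕ) : Function.Surjective (par n) := by
  rintro ⟨⟨x0, x1, ⟨x2, x3⟩, h, q⟩, hc⟩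
  have hc : cdeg (x0, x1, (x2, x3), (h, q)) = n := hc
  suffices H : ∃ (l : Fin 4 → ℤ) (i : ℕ), i < 32 ∧ wt i ≤ n ∧
      tc l (rc^[h.val] (rp n i)) = (x0, x1, (x2, x3), (h, q)) by
    obtain ⟨l, i, h1, h2, h3⟩ := H
    exact ⟨(⟨Multiplicative.ofAdd l, Multiplicative.ofAdd h⟩, ⟨⟨i, h1⟩, h2⟩), Subtype.ext h3⟩
  suffices H : ∃ (l : Fin 4 → ℤ) (a b c d e : ℕ), a ≤ 1 ∧ b ≤ 1 ∧ c ≤ 1 ∧ d ≤ 1 ∧ e ≤ 1 ∧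
      a + b + c + d + q = n ∧
      tc l (rc^[h.val] ((a, b + 2 * e, (c, d), (0, q)) : Cell)) = (x0, x1, (x2, x3), (h, q)) by
    obtain ⟨l, a, b, c, d, e, h1, h2, h3, h4, h5, h6, h7⟩ := H
    obtain ⟨w0, w1, w2, w3, w4, w5⟩ := bits_eq a b c d e h1 h2 h3 h4 h5
    refine ⟨l, 16 * a + 8 * b + 4 * c + 2 * d + e, by omega, by omega, ?_⟩
    rw [rp, w0, w1, w2, w3, w4, w5, show n - (a + b + c + d) = q by omega]
    exact h7
  simp only [cdeg] at hc
  obtain ⟨a, ha, ha'⟩ : ∃ a : ℕ, a ≤ 1 ∧ x0 % 2 = a := ⟨(x0 % 2).toNat, by omega, by omega⟩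
  obtain ⟨b, hb, hb'⟩ : ∃ a : ℕ, a ≤ 1 ∧ x1 % 2 = a := ⟨(x1 % 2).toNat, by omega, by omega⟩
  obtain ⟨c, hc1, hc'⟩ : ∃ a : ℕ, a ≤ 1 ∧ x2 % 2 = a := ⟨(x2 % 2).toNat, by omega, by omega⟩
  obtain ⟨d, hd, hd'⟩ : ∃ a : ℕ, a ≤ 1 ∧ x3 % 2 = a := ⟨(x3 % 2).toNat, by omega, by omega⟩
  have fin : ∀ y0 y2 y3 : ℤ, y0 % 2 = x0 % 2 → y2 % 2 = x2 % 2 → y3 % 2 = x3 % 2 →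
      ∃ (l : Fin 4 → ℤ) (e : ℕ), e ≤ 1 ∧ y0 + 2 * l 0 = x0 ∧
        (b : ℤ) + 2 * e + 2 * (l 1 + l 2 - l 3) = x1 ∧ y2 + 2 * (l 1 + l 3) = x2 ∧
        y3 + 2 * l 2 = x3 := by
    intro y0 y2 y3 k0 k2 k3
    obtain ⟨e, he, he'⟩ : ∃ e : ℕ, e ≤ 1 ∧ ((x1 - b) / 2 + (x2 - y2) / 2 + (x3 - y3) / 2) % 2 = e :=
      ⟨(((x1 - b) / 2 + (x2 - y2) / 2 + (x3 - y3) / 2) % 2).toNat, by omega, by omega⟩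
    refine ⟨![(x0 - y0) / 2, ((x1 - b) / 2 - e + (x2 - y2) / 2 - (x3 - y3) / 2) / 2, (x3 - y3) / 2,
      (x2 - y2) / 2 - ((x1 - b) / 2 - e + (x2 - y2) / 2 - (x3 - y3) / 2) / 2], e, he, ?_⟩
    simp only [Matrix.cons_val]
    omega
  have hn : a + b + c + d + q = n := by omega
  rcases z4 h with rfl | rfl | rfl | rfl
  · obtain ⟨l, e, he, k⟩ := fin a c d (by omega) (by omega) (by omega)
    refine ⟨l, a, b, c, d, e, ha, hb, hc1, hd, he, by omega, ?_⟩
    simp only [val0, val1, val2, val3, Function.iterate_succ_apply, Function.iterate_zero_apply,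
        tc, rc, Prod.mk.injEq]
    exact ⟨k.1, k.2.1, ⟨k.2.2.1, k.2.2.2⟩, trivial⟩
  · obtain ⟨l, e, he, k⟩ := fin (-a) (-c) d (by omega) (by omega) (by omega)
    refine ⟨l, a, b, d, c, e, ha, hb, hd, hc1, he, by omega, ?_⟩
    simp only [val0, val1, val2, val3, Function.iterate_succ_apply, Function.iterate_zero_apply,
        tc, rc, Prod.mk.injEq]
    exact ⟨k.1, k.2.1, ⟨k.2.2.1, k.2.2.2⟩, by decide, trivial⟩
  · obtain ⟨l, e, he, k⟩ := fin a (-c) (-d) (by omega) (by omega) (by omega)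
    refine ⟨l, a, b, c, d, e, ha, hb, hc1, hd, he, by omega, ?_⟩
    simp only [val0, val1, val2, val3, Function.iterate_succ_apply, Function.iterate_zero_apply,
        tc, rc, Prod.mk.injEq, neg_neg]
    exact ⟨k.1, k.2.1, ⟨k.2.2.1, k.2.2.2⟩, by decide, trivial⟩
  · obtain ⟨l, e, he, k⟩ := fin (-a) c (-d) (by omega) (by omega) (by omega)
    refine ⟨l, a, b, d, c, e, ha, hb, hd, hc1, he, by omega, ?_⟩
    simp only [val0, val1, val2, val3, Function.iterate_succ_apply, Function.iterate_zero_apply,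
        tc, rc, Prod.mk.injEq, neg_neg]
    exact ⟨k.1, k.2.1, ⟨k.2.2.1, k.2.2.2⟩, by decide, trivial⟩

end Contr

set_option linter.unusedSimpArgs false
namespace Contr
open Finsupp

/-- The parametrization of cells as an equivalence. -/
noncomputable def parE (n : ℕ) : (Gam × In n) ≃ {c : Cell | cdeg c = n} :=
  Equiv.ofBijective (par n) ⟨par_inj n, par_surj n⟩

/-- Basis of cells. -/
noncomputable def b0 (n : ℕ) : Module.Basis {c : Cell | cdeg c = n} ℤ (Vn n) :=
  Module.Basis.ofRepr (supportedEquivFinsupp {c : Cell | cdeg c = n})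

lemma b0_apply (n : ℕ) (c : {c : Cell | cdeg c = n}) : ((b0 n c : Vn n) : W Cell) = single c.1 1 := by
  exact supportedEquivFinsupp_symm_single (R := ℤ) {c : Cell | cdeg c = n} c (1 : ℤ)

lemma ps_unit (n : ℕ) (p : Gam × In n) : IsUnit (ps p.1 (rp n p.2.1)) := rsk_unit _ _

/-- Basis permuted by the group. -/
noncomputable def bn (n : ℕ) : Module.Basis (Gam × In n) ℤ (Vn n) :=
  ((b0 n).reindex (parE n).symm).isUnitSMul (ps_unit n)

lemma bn_apply (n : ℕ) (g : Gam) (i : In n) :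
    ((bn n (g, i) : Vn n) : W Cell) = act g (single (rp n i.1) 1) := by
  rw [bn, Module.Basis.isUnitSMul_apply, Module.Basis.reindex_apply, Equiv.symm_symm,
    Submodule.coe_smul, b0_apply, act_single]
  simp [parE, par]
  rfl

/-- The resolution. -/
noncomputable def res : FreeRes.Data ℤ Gam where
  V n := Vn n
  ρ n :=
    { toFun := fun g => (act g).restrict (act_mem n g)
      map_one' := by ext x; simp
      map_mul' := fun g h => by ext x; simp }
  d n := d5.restrict (d_mem n)
  d_comm n g x := Subtype.ext (eq_ap (act_cm g).d x).symm
  dd n x := Subtype.ext (eq_ap ax5.dd x)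
  ε := eps.comp (Vn 0).subtype
  ε_comm g x := by
    change eps (act g x) = eps x
    rw [eps_of, eps_of]
    exact DFunLike.congr_fun (eq_ap (act_cm g).e x) c0
  εd x := by
    change eps (d5 x) = 0
    rw [eps_of]
    exact DFunLike.congr_fun (eq_ap ax5.ed x) c0
  ε_surj a := by
    refine ⟨a • ⟨single c0 1, single_mem_supported ℤ _ rfl⟩, ?_⟩
    rw [map_smul]
    change a • eps (single c0 1) = a
    rw [eps, linearCombination_single]
    simp [cdeg, c0]
  exact_zero x hx := by
    refine ⟨⟨s5 x, s_mem 0 x x.2⟩, Subtype.ext (ds x ?_ (d_zero x x.2))⟩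
    rw [e5_apply]
    change eps x = 0 at hx
    rw [hx, zero_smul]
  exact_succ n x hx :=
    ⟨⟨s5 x, s_mem (n + 1) x x.2⟩, Subtype.ext (ds x (e_pos n x x.2) (congrArg Subtype.val hx))⟩
  I := In
  b := bn
  hb n g h i := by
    apply Subtype.ext
    change act g (bn n (h, i) : Vn n) = _
    rw [bn_apply, bn_apply, map_mul]
    rfl

/-- Index of the orbit of a cell with trivial last coordinate. -/
def base (c : Cell) : ℕ :=
  16 * (c.1 % 2).toNat + 8 * (c.2.1 % 2).toNat + 4 * (c.2.2.1.1 % 2).toNat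
    + 2 * (c.2.2.1.2 % 2).toNat + ((c.2.1 / 2 + c.2.2.1.1 / 2 + c.2.2.1.2 / 2) % 2).toNat

/-- Index of the orbit. -/
def oi (c : Cell) : ℕ := base (rc^[(-c.2.2.2.1).val] c)
/-- Sign relative to the representative. -/
def os (c : Cell) : ℤ := rsk (-c.2.2.2.1).val c

/-- The cochain with given values on representatives. -/
noncomputable def Psi (F : ℕ → ℤ) : W Cell →ₗ[ℤ] ℤ :=
  linearCombination ℤ (fun c => os c * F (oi c))

lemma Psi_single (F : ℕ → ℤ) (c : Cell) : Psi F (single c 1) = os c * F (oi c) := by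
  simp [Psi]

lemma base_tc (l : Fin 4 → ℤ) (c : Cell) : base (tc l c) = base c := by
  obtain ⟨x0, x1, ⟨x2, x3⟩, h, q⟩ := c
  simp only [base, tc, Int.add_mul_emod_self_left,
    Int.add_mul_ediv_left _ _ (show (2 : ℤ) ≠ 0 by decide)]
  have : x1 / 2 + (l 1 + l 2 - l 3) + (x2 / 2 + (l 1 + l 3)) + (x3 / 2 + l 2) =
    x1 / 2 + x2 / 2 + x3 / 2 + 2 * (l 1 + l 2) := by ring
  rw [this, Int.add_mul_emod_self_left]

lemma rck_tc (k : ℕ) : ∀ (l : Fin 4 → ℤ) (c : Cell), ∃ l', rc^[k] (tc l c) = tc l' (rc^[k] c) := by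
  induction k with
  | zero => exact fun l c => ⟨l, rfl⟩
  | succ k ih =>
    intro l c
    obtain ⟨l', h⟩ := ih (holM.mulVec l) (rc c)
    exact ⟨l', by rw [Function.iterate_succ_apply, Function.iterate_succ_apply, rc_tc, h]⟩

lemma rsk_tc (k : ℕ) (l : Fin 4 → ℤ) (c : Cell) : rsk k (tc l c) = rsk k c := by
  induction k with
  | zero => rfl
  | succ k ih =>
    obtain ⟨l', h⟩ := rck_tc k l c
    simp only [rsk, ih, h, rsg_tc]

lemma Psi_T (F : ℕ → ℤ) (l : Fin 4 → ℤ) (x : W Cell) : Psi F (T l x) = Psi F x := by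
  have : (Psi F).comp (T l) = Psi F := by
    apply Finsupp.lhom_ext'
    intro c
    apply LinearMap.ext_ring
    change Psi F (T l (single c 1)) = Psi F (single c 1)
    rw [T_single, Psi_single, Psi_single, os, oi]
    change rsk (-c.2.2.2.1).val (tc l c) * F (base (rc^[(-c.2.2.2.1).val] (tc l c))) = _
    obtain ⟨l', h⟩ := rck_tc (-c.2.2.2.1).val l c
    rw [rsk_tc, h, base_tc]
    rfl
  exact LinearMap.congr_fun this x

lemma rsk_succ' (k : ℕ) (c : Cell) : rsk (k + 1) c = rsg c * rsk k (rc c) := by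
  induction k with
  | zero => simp [rsk]
  | succ k ih =>
    rw [rsk, ih, rsk, Function.iterate_succ_apply, mul_assoc]

lemma Psi_R (F : ℕ → ℤ) (x : W Cell) : Psi F (R x) = Psi F x := by
  have : (Psi F).comp R = Psi F := by
    apply Finsupp.lhom_ext'
    intro c
    apply LinearMap.ext_ring
    change Psi F (R (single c 1)) = Psi F (single c 1)
    rw [R_single, single_smul1, map_smul, Psi_single, Psi_single, smul_eq_mul, os, oi, os, oi]
    change rsg c * (rsk (-(c.2.2.2.1 + 1)).val (rc c) * F (base (rc^[(-(c.2.2.2.1 + 1)).val] (rc c)))) = _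
    rw [← mul_assoc, ← rsk_succ', ← Function.iterate_succ_apply]
    have : (-(c.2.2.2.1 + 1)).val + 1 = (-c.2.2.2.1).val ∨
      (-(c.2.2.2.1 + 1)).val + 1 = 4 ∧ (-c.2.2.2.1).val = 0 := by
      generalize c.2.2.2.1 = h
      revert h; decide
    rcases this with h | ⟨h, h'⟩
    · rw [Nat.succ_eq_add_one, h]
    · rw [Nat.succ_eq_add_one, h, h', rc4, rsk4, Function.iterate_zero_apply, rsk]
  exact LinearMap.congr_fun this x

lemma Psi_act (F : ℕ → ℤ) (g : Gam) (x : W Cell) : Psi F (act g x) = Psi F x := by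
  have : act g = T g.left.toAdd * R ^ g.right.toAdd.val := rfl
  rw [this, Module.End.mul_apply, Psi_T]
  generalize g.right.toAdd.val = k
  induction k with
  | zero => rw [pow_zero, Module.End.one_apply]
  | succ k ih => rw [pow_succ', Module.End.mul_apply, Psi_R, ih]

lemma oi_rp (n i : ℕ) (hi : i < 32) : oi (rp n i) = i := by
  have h0 : (-(rp n i).2.2.2.1).val = 0 := (by decide : (-(0 : ZMod 4)).val = 0)
  rw [oi, h0, Function.iterate_zero_apply]
  obtain ⟨a, b, c, d, e, ha, hb, hc, hd, he, hi', w0, w1, w2, w3, w4, -⟩ := bits i hi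
  simp only [base, rp, w0, w1, w2, w3, w4]
  clear w0 w1 w2 w3 w4 h0
  omega

lemma os_rp (n i : ℕ) : os (rp n i) = 1 := by
  have h0 : (-(rp n i).2.2.2.1).val = 0 := (by decide : (-(0 : ZMod 4)).val = 0)
  rw [os, h0]
  rfl

/-- Extension by zero. -/
def ex {n : ℕ} (F : In n → ℤ) (i : ℕ) : ℤ :=
  if h : i < 32 ∧ wt i ≤ n then F ⟨⟨i, h.1⟩, h.2⟩ else 0

lemma ex_apply {n : ℕ} (F : In n → ℤ) (i : In n) : ex F i.1 = F i := by
  rw [ex, dif_pos ⟨i.1.2, i.2⟩]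

lemma constr_eq (n : ℕ) (F : In n → ℤ) (x : Vn n) :
    (bn n).constr ℤ (fun p => F p.2) x = Psi (ex F) x := by
  have : (bn n).constr ℤ (fun p => F p.2) = (Psi (ex F)).comp (Vn n).subtype := by
    apply (bn n).ext
    rintro ⟨g, i⟩
    rw [Module.Basis.constr_basis, LinearMap.comp_apply, Submodule.subtype_apply, bn_apply,
      Psi_act, Psi_single, oi_rp _ _ i.1.2, os_rp, ex_apply, one_mul]
  rw [this]; rfl

lemma res_δ (n : ℕ) (F : In n → ℤ) (i : In (n + 1)) :
    res.δ n F i = Psi (ex F) (d5 (single (rp (n + 1) i.1) 1)) := by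
  have h1 : res.δ n F i = (bn n).constr ℤ (fun p => F p.2)
    (d5.restrict (d_mem n) (bn (n + 1) (1, i))) := rfl
  rw [h1, constr_eq, LinearMap.coe_restrict_apply, bn_apply, map_one, Module.End.one_apply]

end Contr

set_option linter.unusedSimpArgs false
namespace Contr
open Finsupp

/-- Sparse linear forms. -/
abbrev Form := List (ℕ × ℤ)
/-- Evaluation of a linear form. -/
def ev (F : ℕ → ℤ) (L : Form) : ℤ := (L.map fun p => p.2 * F p.1).sum
/-- Scaling. -/
def sm (a : ℤ) (L : Form) : Form := L.map fun p => (p.1, a * p.2)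
/-- Substitution of forms into a form. -/
def comp (L : Form) (A : ℕ → Form) : Form := L.flatMap fun p => sm p.2 (A p.1)
/-- Coefficient. -/
def cf (L : Form) (j : ℕ) : ℤ := (L.map fun p => if p.1 = j then p.2 else 0).sum

@[simp] lemma ev_nil (F : ℕ → ℤ) : ev F [] = 0 := rfl
@[simp] lemma ev_cons (F : ℕ → ℤ) (p : ℕ × ℤ) (L : Form) :
    ev F (p :: L) = p.2 * F p.1 + ev F L := by simp [ev]
@[simp] lemma ev_append (F : ℕ → ℤ) (L M : Form) : ev F (L ++ M) = ev F L + ev F M := by simp [ev]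
lemma ev_sm (F : ℕ → ℤ) (a : ℤ) (L : Form) : ev F (sm a L) = a * ev F L := by
  induction L with
  | nil => simp [sm]
  | cons p L ih =>
    change ev F ((p.1, a * p.2) :: sm a L) = _
    rw [ev_cons, ih, ev_cons]; ring
lemma ev_comp (F : ℕ → ℤ) (A : ℕ → Form) (L : Form) :
    ev F (comp L A) = ev (fun j => ev F (A j)) L := by
  induction L with
  | nil => rfl
  | cons p L ih =>
    change ev F (sm p.2 (A p.1) ++ comp L A) = _
    rw [ev_append, ih, ev_cons, ev_sm]
lemma ev_congr {F G : ℕ → ℤ} {L : Form} (h : ∀ p ∈ L, F p.1 = G p.1) : ev F L = ev G L := by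
  induction L with
  | nil => rfl
  | cons p L ih =>
    rw [ev_cons, ev_cons, h p (by simp), ih (fun q hq => h q (by simp [hq]))]
lemma ev_add (F G : ℕ → ℤ) (L : Form) : ev (fun j => F j + G j) L = ev F L + ev G L := by
  induction L with
  | nil => rfl
  | cons p L ih => rw [ev_cons, ev_cons, ev_cons, ih]; ring
lemma ev_zero (L : Form) : ev (fun _ => 0) L = 0 := by
  induction L with
  | nil => rfl
  | cons p L ih => rw [ev_cons, ih]; simp

/-- All coefficients are divisible by `d`. -/
def Zr (d : ℤ) (L : Form) : Prop := (∀ p ∈ L, p.1 < 32) ∧ ∀ j < 32, d ∣ cf L j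

instance (d : ℤ) (L : Form) : Decidable (Zr d L) := inferInstanceAs (Decidable (_ ∧ _))

lemma ev_eq (F : ℕ → ℤ) (L : Form) (h : ∀ p ∈ L, p.1 < 32) :
    ev F L = ∑ j ∈ Finset.range 32, cf L j * F j := by
  induction L with
  | nil => simp [cf]
  | cons p L ih =>
    have h1 : ∀ j, cf (p :: L) j = (if p.1 = j then p.2 else 0) + cf L j := fun j => by simp [cf]
    rw [ev_cons, ih (fun q hq => h q (by simp [hq]))]
    simp only [h1, add_mul, Finset.sum_add_distrib, ite_mul, zero_mul]
    rw [Finset.sum_ite_eq, if_pos (Finset.mem_range.2 (h p (by simp)))]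

lemma Zr.dvd {d : ℤ} {L : Form} (h : Zr d L) (F : ℕ → ℤ) : d ∣ ev F L := by
  rw [ev_eq F L h.1]
  exact Finset.dvd_sum fun j hj => Dvd.dvd.mul_right (h.2 j (Finset.mem_range.1 hj)) _

lemma Zr.zero {L : Form} (h : Zr 0 L) (F : ℕ → ℤ) : ev F L = 0 := by
  have := h.dvd F
  rwa [zero_dvd_iff] at this

/-- Certificate for the computation of the cohomology of `A` followed by `B`. -/
structure Cert (X0 X1 X2 : List ℕ) (A B h h' pi I Wt : ℕ → Form) (d : ℕ → ℤ) (K : ℕ) : Prop where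
  vA : ∀ i ∈ X1, ∀ p ∈ A i, p.1 ∈ X0
  vB : ∀ i ∈ X2, ∀ p ∈ B i, p.1 ∈ X1
  vp : ∀ k < K, ∀ p ∈ pi k, p.1 ∈ X1
  vh' : ∀ i ∈ X1, ∀ p ∈ h' i, p.1 ∈ X2
  vI : ∀ i ∈ X1, ∀ p ∈ I i, p.1 < K
  c1 : ∀ k < K, Zr (d k) (comp (pi k) A)
  c2 : ∀ i ∈ X1, Zr 0 ((i, -4) :: (sm 4 (comp (A i) h) ++ (comp (h' i) B ++
    sm 4 (comp (I i) pi))))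
  c3 : ∀ i ∈ X1, Zr 0 (comp (A i) Wt ++ (sm (-1) (comp (I i) (fun k => [(k, d k)]))))
  c4 : ∀ i ∈ X2, Zr 0 (comp (B i) I)
  c5 : ∀ k < K, Zr 0 ((k, -1) :: comp (pi k) I)

/-- The coboundary on the explicit index sets. -/
noncomputable def dr (n : ℕ) (F : In n → ℤ) : In (n + 1) → ℤ := fun i => res.δ n F i

theorem main' (m : ℕ) {Q : Type} [AddCommGroup Q] (p : (In (m + 1) → ℤ) →+ Q)
    (h1 : ∀ y : In m → ℤ, p (dr m y) = 0)
    (h2 : ∀ x : In (m + 1) → ℤ, dr (m + 1) x = 0 → p x = 0 → ∃ y : In m → ℤ, dr m y = x)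
    (h3 : ∀ q, ∃ x : In (m + 1) → ℤ, dr (m + 1) x = 0 ∧ p x = q) :
    Nonempty (H (m + 1) ≃+ Q) :=
  res.main m p h1 h2 h3

theorem cert_main {m : ℕ} {X0 X1 X2 : List ℕ} {A B h h' pi I Wt : ℕ → Form} {d : ℕ → ℤ} {K : ℕ}
    (C : Cert X0 X1 X2 A B h h' pi I Wt d K)
    (hX0 : ∀ i, i ∈ X0 ↔ i < 32 ∧ wt i ≤ m)
    (hX1 : ∀ i, i ∈ X1 ↔ i < 32 ∧ wt i ≤ m + 1)
    (hX2 : ∀ i, i ∈ X2 ↔ i < 32 ∧ wt i ≤ m + 2)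
    (hA : ∀ F, ∀ i ∈ X1, Psi F (d5 (single (rp (m + 1) i) 1)) = ev F (A i))
    (hB : ∀ F, ∀ i ∈ X2, Psi F (d5 (single (rp (m + 2) i) 1)) = ev F (B i))
    {Q : Type} [AddCommGroup Q] (e : (ℕ → ℤ) →+ Q) (he : ∀ v, e v = 0 ↔ ∀ k < K, d k ∣ v k)
    (hs : ∀ q, ∃ v, e v = q) :
    Nonempty (H (m + 1) ≃+ Q) := by
  have exe : ∀ (n : ℕ) (F : In n → ℤ) (i : In n), ex F i.1 = F i := fun n F i => ex_apply F i
  have hδA : ∀ (F : In m → ℤ) (i : ℕ), i ∈ X1 → ex (n := m + 1) (dr m F) i = ev (ex F) (A i) := by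
    intro F i hi
    have h2 := (hX1 i).1 hi
    rw [← hA _ i hi]
    exact (exe (m + 1) _ ⟨⟨i, h2.1⟩, h2.2⟩).trans (res_δ m F ⟨⟨i, h2.1⟩, h2.2⟩)
  have hδB : ∀ (F : In (m + 1) → ℤ) (i : ℕ), i ∈ X2 →
      ex (n := m + 2) (dr (m + 1) F) i = ev (ex F) (B i) := by
    intro F i hi
    have h2 := (hX2 i).1 hi
    rw [← hB _ i hi]
    exact (exe (m + 2) _ ⟨⟨i, h2.1⟩, h2.2⟩).trans (res_δ (m + 1) F ⟨⟨i, h2.1⟩, h2.2⟩)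
  have exr0 : ∀ (G : ℕ → ℤ) (i : ℕ), i ∈ X0 → ex (fun j : In m => G j.1) i = G i := by
    intro G i hi
    rw [ex, dif_pos ((hX0 i).1 hi)]
  have exr1 : ∀ (G : ℕ → ℤ) (i : ℕ), i ∈ X1 → ex (fun j : In (m + 1) => G j.1) i = G i := by
    intro G i hi
    rw [ex, dif_pos ((hX1 i).1 hi)]
  have exadd : ∀ (x y : In (m + 1) → ℤ) (j : ℕ), ex (x + y) j = ex x j + ex y j := by
    intro x y j
    unfold ex
    split_ifs
    · rfl
    · simp
  let p : (In (m + 1) → ℤ) →+ Q := AddMonoidHom.mk' (fun x => e (fun k => ev (ex x) (pi k))) (by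
    intro x y
    rw [← map_add]
    congr 1
    funext k
    rw [Pi.add_apply, ← ev_add]
    exact ev_congr fun q _ => exadd x y q.1)
  have hp : ∀ x, p x = e (fun k => ev (ex x) (pi k)) := fun _ => rfl
  refine main' m p ?_ ?_ ?_
  · intro y
    rw [hp, he]
    intro k hk
    have : ev (ex (n := m + 1) (dr m y)) (pi k) = ev (ex (n := m) y) (comp (pi k) A) := by
      rw [ev_comp]
      exact ev_congr fun q hq => hδA y q.1 (C.vp k hk q hq)
    rw [this]
    exact (C.c1 k hk).dvd _
  · intro x hx hpx
    rw [hp, he] at hpx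
    have hBx : ∀ i ∈ X2, ev (ex x) (B i) = 0 := by
      intro i hi
      rw [← hδB x i hi, hx, ex]
      split_ifs <;> rfl
    have : ∀ k, ∃ t, k < K → ev (ex x) (pi k) = d k * t := by
      intro k
      by_cases hk : k < K
      · obtain ⟨t, ht⟩ := hpx k hk
        exact ⟨t, fun _ => ht⟩
      · exact ⟨0, fun h => absurd h hk⟩
    choose t ht using this
    refine ⟨fun j : In m => ev (ex x) (h j.1) + ev t (Wt j.1), ?_⟩
    funext i
    have hi : (i.1 : ℕ) ∈ X1 := (hX1 _).2 ⟨i.1.2, i.2⟩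
    rw [← exe (m + 1) x i, ← exe (m + 1) (dr m _) i, hδA _ _ hi]
    have e1 : ev (ex (fun j : In m => ev (ex x) (h j.1) + ev t (Wt j.1))) (A i.1) =
        ev (ex x) (comp (A i.1) h) + ev t (comp (A i.1) Wt) := by
      rw [ev_comp, ev_comp, ← ev_add]
      exact ev_congr fun q hq => exr0 (fun j => ev (ex x) (h j) + ev t (Wt j)) _ (C.vA _ hi q hq)
    have e3 := (C.c3 _ hi).zero t
    have e4 : ev t (comp (I i.1) (fun k => [(k, d k)])) = ev (ex x) (comp (I i.1) pi) := by
      rw [ev_comp, ev_comp]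
      refine ev_congr fun q hq => ?_
      rw [ht q.1 (C.vI _ hi q hq)]
      simp
    have e2 := (C.c2 _ hi).zero (ex x)
    have e5 : ev (ex x) (comp (h' i.1) B) = 0 := by
      rw [ev_comp, ← ev_zero (h' i.1)]
      exact ev_congr fun q hq => hBx _ (C.vh' _ hi q hq)
    rw [ev_append, ev_sm, e4] at e3
    rw [ev_cons, ev_append, ev_append, ev_sm, ev_sm, e5] at e2
    dsimp only at e2
    refine e1.trans ?_
    linarith
  · intro q
    obtain ⟨v, hv⟩ := hs q
    refine ⟨fun j : In (m + 1) => ev v (I j.1), ?_, ?_⟩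
    · funext i
      have hi : (i.1 : ℕ) ∈ X2 := (hX2 _).2 ⟨i.1.2, i.2⟩
      rw [← exe (m + 2) (dr (m + 1) _) i, hδB _ _ hi]
      rw [show (0 : In (m + 1 + 1) → ℤ) i = 0 from rfl, ← (C.c4 _ hi).zero v, ev_comp]
      exact ev_congr fun q hq => exr1 (fun j => ev v (I j)) _ (C.vB _ hi q hq)
    · rw [hp, ← hv, ← sub_eq_zero, ← map_sub, he]
      intro k hk
      have e5 := (C.c5 k hk).zero v
      have e6 : ev (ex (fun j : In (m + 1) => ev v (I j.1))) (pi k) = ev v (comp (pi k) I) := by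
        rw [ev_comp]
        exact ev_congr fun q hq => exr1 (fun j => ev v (I j)) _ (C.vp k hk q hq)
      rw [ev_cons] at e5
      dsimp only at e5
      rw [Pi.sub_apply, e6, show ev v (comp (pi k) I) - v k = 0 by linarith]
      exact dvd_zero _

end Contr

set_option linter.unusedSimpArgs false
namespace Contr
open Finsupp

lemma pd_eval {X Y : Type} (d σ : E X) (d' : E Y) (φ : W (X × Y) →ₗ[ℤ] ℤ) (x : X) (y : Y) (t : ℤ)
    (ht : σ (single x 1) = t • single x 1) :
    φ (pd X Y d σ d' (single (x, y) 1)) =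
      (φ ∘ₗ lmapDomain ℤ ℤ (fun x => (x, y))) (d (single x 1)) +
      t * (φ ∘ₗ lmapDomain ℤ ℤ (fun y => (x, y))) (d' (single y 1)) := by
  have h1 : Lh X Y d (single (x, y) 1) = mapDomain (fun x => (x, y)) (d (single x 1)) := by
    change mk _ _ = _
    rw [mk_single, one_smul]
  have h2 : Rh X Y d' (single (x, y) 1) = mapDomain (fun y => (x, y)) (d' (single y 1)) := by
    change mk _ _ = _
    rw [mk_single, one_smul]
  have h3 : ∀ w : W Y, Lh X Y σ (mapDomain (fun y => (x, y)) w) =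
      t • mapDomain (fun y => (x, y)) w := by
    intro w
    induction w using Finsupp.induction_linear with
    | zero => simp
    | add f g hf hg => rw [mapDomain_add, map_add, hf, hg, smul_add]
    | single y a =>
      rw [mapDomain_single]
      change mk _ _ = _
      rw [mk_single]
      change a • mapDomain (fun x => (x, y)) (σ (single x 1)) = _
      rw [ht]
      simp [mapDomain_smul, mapDomain_single, mul_comm]
  change φ ((Lh X Y d + Lh X Y σ * Rh X Y d') _) = _
  rw [LinearMap.add_apply, Module.End.mul_apply, h1, h2, h3, map_add, map_smul]
  rfl

lemma lσ_S (x : ℤ) : lσ (single x 1) = rS x • single x 1 := by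
  rw [lσ, mk_single, one_smul, rS]
  split_ifs <;> simp

lemma sgn2_S (x y : ℤ) : σ2 (single (x, y) 1) = (rS x * rS y) • single (x, y) 1 := by
  have h : ∀ z : ℤ, lσ (single z 1) = single z (rS z) := fun z => by
    rw [lσ_S, ← single_smul1]
  have := pp_single (h x) (h y)
  rw [← single_smul1]
  exact this

/-- Boundary of cells of the line. -/
def lA (x : ℤ) : List (ℤ × ℤ) := if x % 2 = 0 then [] else [(x + 1, 1), (x - 1, -1)]
/-- Boundary in the periodic resolution. -/
def bm (md : ℕ) (h : ZMod 4) : List (ZMod 4 × ℤ) :=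
  match md with
  | 0 => []
  | 1 => [(h + 1, 1), (h, -1)]
  | _ => [(h, 1), (h + 1, 1), (h + 2, 1), (h + 3, 1)]
/-- Mode of a degree. -/
def mode (q : ℕ) : ℕ := if q = 0 then 0 else if q % 2 = 1 then 1 else 2

lemma ld_eval (ψ : W ℤ →ₗ[ℤ] ℤ) (x : ℤ) :
    ψ (ld (single x 1)) = ((lA x).map fun p => p.2 * ψ (single p.1 1)).sum := by
  rw [ld, mk_single, one_smul, lA]
  split_ifs <;> simp <;> ring

lemma bd_eval (ψ : W (ZMod 4 × ℕ) →ₗ[ℤ] ℤ) (h : ZMod 4) (q : ℕ) :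
    ψ (bd (single (h, q) 1)) =
      ((bm (mode q) h).map fun p => p.2 * ψ (single (p.1, q - 1) 1)).sum := by
  rcases q with _ | q
  · rw [bd_zero]; simp [mode, bm]
  · rw [bd_succ]
    by_cases hq : q % 2 = 0
    · rw [if_pos hq, show mode (q + 1) = 1 by simp [mode]; omega]
      simp [bm]; ring
    · rw [if_neg hq, show mode (q + 1) = 2 by simp [mode]; omega]
      simp [bm]; ring

lemma rck_q (k : ℕ) (x0 x1 x2 x3 : ℤ) (h : ZMod 4) (q : ℕ) :
    rc^[k] (x0, x1, (x2, x3), (h, q)) =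
      ((rc^[k] (x0, x1, (x2, x3), (h, 0))).1, (rc^[k] (x0, x1, (x2, x3), (h, 0))).2.1,
        (rc^[k] (x0, x1, (x2, x3), (h, 0))).2.2.1,
        ((rc^[k] (x0, x1, (x2, x3), (h, 0))).2.2.2.1, q)) := by
  induction k with
  | zero => rfl
  | succ k ih => rw [Function.iterate_succ_apply', Function.iterate_succ_apply', ih]; rfl

lemma oi_q (x0 x1 x2 x3 : ℤ) (h : ZMod 4) (q : ℕ) :
    oi (x0, x1, (x2, x3), (h, q)) = oi (x0, x1, (x2, x3), (h, 0)) := by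
  rw [oi, rck_q]; rfl

lemma rsk_q (k : ℕ) (x0 x1 x2 x3 : ℤ) (h : ZMod 4) (q : ℕ) :
    rsk k (x0, x1, (x2, x3), (h, q)) = rsk k (x0, x1, (x2, x3), (h, 0)) := by
  induction k with
  | zero => rfl
  | succ k ih => rw [rsk, rsk, ih, rck_q]; rfl

lemma os_q (x0 x1 x2 x3 : ℤ) (h : ZMod 4) (q : ℕ) :
    os (x0, x1, (x2, x3), (h, q)) = os (x0, x1, (x2, x3), (h, 0)) := by
  rw [os]
  exact rsk_q _ _ _ _ _ _ _

/-- One term of a row. -/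
def tm (a : ℤ) (x0 x1 x2 x3 : ℤ) (h : ZMod 4) : ℕ × ℤ :=
  (oi (x0, x1, (x2, x3), (h, 0)), a * os (x0, x1, (x2, x3), (h, 0)))

/-- Rows of the coboundary. -/
def row (md : ℕ) (x0 x1 x2 x3 : ℤ) : Form :=
  (lA x0).map (fun p => tm p.2 p.1 x1 x2 x3 0) ++
  ((lA x1).map (fun p => tm (rS x0 * p.2) x0 p.1 x2 x3 0) ++
  ((lA x2).map (fun p => tm (rS x0 * rS x1 * p.2) x0 x1 p.1 x3 0) ++
  ((lA x3).map (fun p => tm (rS x0 * rS x1 * rS x2 * p.2) x0 x1 x2 p.1 0) ++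
  ((bm md 0).map (fun p => tm (rS x0 * rS x1 * (rS x2 * rS x3) * p.2) x0 x1 x2 x3 p.1)))))

lemma ev_map {α : Type} (F : ℕ → ℤ) (L : List α) (g : α → ℕ × ℤ) :
    ev F (L.map g) = (L.map fun p => (g p).2 * F (g p).1).sum := by
  rw [ev, List.map_map]; rfl

lemma mul_sum_map {α : Type} (c : ℤ) (L : List α) (g : α → ℤ) :
    c * (L.map g).sum = (L.map fun p => c * g p).sum := by
  induction L with
  | nil => simp
  | cons a L ih => simp [mul_add, ih]

lemma row_eval (F : ℕ → ℤ) (x0 x1 x2 x3 : ℤ) (q : ℕ) :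
    Psi F (d5 (single (x0, x1, (x2, x3), (0, q)) 1)) = ev F (row (mode q) x0 x1 x2 x3) := by
  rw [d5, pd_eval _ _ _ _ _ _ _ (lσ_S x0), d4, pd_eval _ _ _ _ _ _ _ (lσ_S x1), d3,
    pd_eval _ _ _ _ _ _ _ (sgn2_S x2 x3), d2, pd_eval _ _ _ _ _ _ _ (lσ_S x2)]
  simp only [ld_eval, bd_eval]
  simp only [LinearMap.comp_apply, lmapDomain_apply, mapDomain_single, Psi_single]
  simp only [oi_q _ _ _ _ _ q, os_q _ _ _ _ _ q, oi_q _ _ _ _ _ (q - 1), os_q _ _ _ _ _ (q - 1)]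
  simp only [row, ev_append, ev_map, tm, mul_add, mul_sum_map]
  simp only [mul_assoc, add_assoc]

/-- Rows indexed by orbits. -/
def rowM (i md : ℕ) : Form :=
  row md ((i / 16 % 2 : ℕ) : ℤ) (((i / 8 % 2 : ℕ) : ℤ) + 2 * ((i % 2 : ℕ) : ℤ))
    ((i / 4 % 2 : ℕ) : ℤ) ((i / 2 % 2 : ℕ) : ℤ)
/-- Rows of the coboundary into degree `n`. -/
def dl (n i : ℕ) : Form := rowM i (mode (n - wt i))

lemma dl_eval (F : ℕ → ℤ) (n i : ℕ) :
    Psi F (d5 (single (rp n i) 1)) = ev F (dl n i) := row_eval F _ _ _ _ _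

lemma dl_eval' (F : ℕ → ℤ) (n i : ℕ) (L : Form) (h : Zr 0 (dl n i ++ sm (-1) L)) :
    Psi F (d5 (single (rp n i) 1)) = ev F L := by
  have := h.zero F
  rw [ev_append, ev_sm] at this
  rw [dl_eval]
  linarith

lemma wt_le (i : ℕ) : wt i ≤ 4 := by unfold wt; omega

lemma dl_per (n i : ℕ) (hn : 5 ≤ n) : dl (n + 2) i = dl n i := by
  have := wt_le i
  unfold dl
  congr 1
  unfold mode
  rw [show (n + 2 - wt i) = n - wt i + 2 by omega]
  simp
  omega

end Contr

set_option linter.unusedSimpArgs false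
namespace Contr

/-- Orbit indices. -/
def Xs (n : ℕ) : List ℕ := (List.range 32).filter fun i => wt i ≤ n

/-- Reading a table. -/
def rd (L : List (ℕ × Form)) (i : ℕ) : Form := (L.lookup i).getD []

/-- Coboundary into degree 1. -/
def tA1 : ℕ → Form := rd
  [(2, [(0, -1), (1, 1)]), (3, [(0, 1), (1, -1)]), (4, [(0, -1), (1, 1)]), (5, [(0, 1), (1, -1)]),
    (8, [(0, -1), (1, 1)]), (9, [(0, 1), (1, -1)])]

/-- Coboundary into degree 2. -/
def tA2 : ℕ → Form := rd
  [(0, [(0, 4)]), (1, [(1, 4)]), (2, [(0, -1), (1, 1), (2, 1), (4, -1)]),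
    (3, [(0, 1), (1, -1), (3, 1), (5, -1)]), (4, [(0, -1), (1, 1), (3, 1), (4, 1)]),
    (5, [(0, 1), (1, -1), (2, 1), (5, 1)]), (6, [(2, -1), (3, 1), (4, 1), (5, -1)]),
    (7, [(2, 1), (3, -1), (4, -1), (5, 1)]), (8, [(0, -1), (1, 1)]), (9, [(0, 1), (1, -1)]),
    (10, [(2, -1), (3, 1), (8, 1), (9, -1)]), (11, [(2, 1), (3, -1), (8, -1), (9, 1)]),
    (12, [(4, -1), (5, 1), (8, 1), (9, -1)]), (13, [(4, 1), (5, -1), (8, -1), (9, 1)]),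
    (16, [(16, 2)]), (17, [(17, 2)]), (18, [(16, 1), (17, -1)]), (19, [(16, -1), (17, 1)]),
    (20, [(16, 1), (17, -1)]), (21, [(16, -1), (17, 1)]), (24, [(16, 1), (17, -1)]),
    (25, [(16, -1), (17, 1)])]

/-- Coboundary into degree 3. -/
def tA3 : ℕ → Form := rd
  [(2, [(0, -1), (1, 1), (2, -1), (3, 1), (4, -1), (5, 1)]),
    (3, [(0, 1), (1, -1), (2, 1), (3, -1), (4, 1), (5, -1)]),
    (4, [(0, -1), (1, 1), (2, -1), (3, 1), (4, -1), (5, 1)]),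
    (5, [(0, 1), (1, -1), (2, 1), (3, -1), (4, 1), (5, -1)]),
    (6, [(2, -1), (3, 1), (4, 1), (5, -1), (6, -1), (7, 1)]),
    (7, [(2, 1), (3, -1), (4, -1), (5, 1), (6, 1), (7, -1)]), (8, [(0, -1), (1, 1), (8, -4)]),
    (9, [(0, 1), (1, -1), (9, -4)]), (10, [(2, -1), (3, 1), (8, 1), (9, -1), (10, -1), (12, 1)]),
    (11, [(2, 1), (3, -1), (8, -1), (9, 1), (11, -1), (13, 1)]),
    (12, [(4, -1), (5, 1), (8, 1), (9, -1), (11, -1), (12, -1)]),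
    (13, [(4, 1), (5, -1), (8, -1), (9, 1), (10, -1), (13, -1)]),
    (14, [(6, -1), (7, 1), (10, 1), (11, -1), (12, -1), (13, 1)]),
    (15, [(6, 1), (7, -1), (10, -1), (11, 1), (12, 1), (13, -1)]),
    (18, [(16, 1), (17, -1), (18, -1), (20, -1)]), (19, [(16, -1), (17, 1), (19, -1), (21, -1)]),
    (20, [(16, 1), (17, -1), (19, 1), (20, -1)]), (21, [(16, -1), (17, 1), (18, 1), (21, -1)]),
    (22, [(18, 1), (19, -1), (20, -1), (21, 1)]), (23, [(18, -1), (19, 1), (20, 1), (21, -1)]),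
    (24, [(16, 1), (17, -1), (24, -2)]), (25, [(16, -1), (17, 1), (25, -2)]),
    (26, [(18, 1), (19, -1), (24, -1), (25, 1)]), (27, [(18, -1), (19, 1), (24, 1), (25, -1)]),
    (28, [(20, 1), (21, -1), (24, -1), (25, 1)]), (29, [(20, -1), (21, 1), (24, 1), (25, -1)])]

/-- Coboundary into degree 4. -/
def tA4 : ℕ → Form := rd
  [(0, [(0, 4)]), (1, [(1, 4)]), (2, [(0, -1), (1, 1), (2, 1), (4, -1)]),
    (3, [(0, 1), (1, -1), (3, 1), (5, -1)]), (4, [(0, -1), (1, 1), (3, 1), (4, 1)]),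
    (5, [(0, 1), (1, -1), (2, 1), (5, 1)]),
    (6, [(2, -1), (3, 1), (4, 1), (5, -1), (6, 2), (7, 2)]),
    (7, [(2, 1), (3, -1), (4, -1), (5, 1), (6, 2), (7, 2)]), (8, [(0, -1), (1, 1)]),
    (9, [(0, 1), (1, -1)]),
    (10, [(2, -1), (3, 1), (8, 1), (9, -1), (10, 1), (11, -1), (12, 1), (13, -1)]),
    (11, [(2, 1), (3, -1), (8, -1), (9, 1), (10, -1), (11, 1), (12, -1), (13, 1)]),
    (12, [(4, -1), (5, 1), (8, 1), (9, -1), (10, 1), (11, -1), (12, 1), (13, -1)]),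
    (13, [(4, 1), (5, -1), (8, -1), (9, 1), (10, -1), (11, 1), (12, -1), (13, 1)]),
    (14, [(6, -1), (7, 1), (10, 1), (11, -1), (12, -1), (13, 1), (14, 1), (15, -1)]),
    (15, [(6, 1), (7, -1), (10, -1), (11, 1), (12, 1), (13, -1), (14, -1), (15, 1)]),
    (16, [(16, 2)]), (17, [(17, 2)]),
    (18, [(16, 1), (17, -1), (18, 1), (19, -1), (20, -1), (21, 1)]),
    (19, [(16, -1), (17, 1), (18, -1), (19, 1), (20, 1), (21, -1)]),
    (20, [(16, 1), (17, -1), (18, -1), (19, 1), (20, 1), (21, -1)]),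
    (21, [(16, -1), (17, 1), (18, 1), (19, -1), (20, -1), (21, 1)]),
    (22, [(18, 1), (19, -1), (20, -1), (21, 1), (22, 1), (23, 1)]),
    (23, [(18, -1), (19, 1), (20, 1), (21, -1), (22, 1), (23, 1)]), (24, [(16, 1), (17, -1)]),
    (25, [(16, -1), (17, 1)]), (26, [(18, 1), (19, -1), (24, -1), (25, 1), (26, 1), (28, 1)]),
    (27, [(18, -1), (19, 1), (24, 1), (25, -1), (27, 1), (29, 1)]),
    (28, [(20, 1), (21, -1), (24, -1), (25, 1), (27, -1), (28, 1)]),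
    (29, [(20, -1), (21, 1), (24, 1), (25, -1), (26, -1), (29, 1)]),
    (30, [(22, 1), (23, -1), (26, -1), (27, 1), (28, 1), (29, -1)]),
    (31, [(22, -1), (23, 1), (26, 1), (27, -1), (28, -1), (29, 1)])]

/-- Coboundary into degree 5. -/
def tA5 : ℕ → Form := rd
  [(2, [(0, -1), (1, 1), (2, -1), (3, 1), (4, -1), (5, 1)]),
    (3, [(0, 1), (1, -1), (2, 1), (3, -1), (4, 1), (5, -1)]),
    (4, [(0, -1), (1, 1), (2, -1), (3, 1), (4, -1), (5, 1)]),
    (5, [(0, 1), (1, -1), (2, 1), (3, -1), (4, 1), (5, -1)]),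
    (6, [(2, -1), (3, 1), (4, 1), (5, -1), (6, -1), (7, 1)]),
    (7, [(2, 1), (3, -1), (4, -1), (5, 1), (6, 1), (7, -1)]), (8, [(0, -1), (1, 1), (8, -4)]),
    (9, [(0, 1), (1, -1), (9, -4)]), (10, [(2, -1), (3, 1), (8, 1), (9, -1), (10, -1), (12, 1)]),
    (11, [(2, 1), (3, -1), (8, -1), (9, 1), (11, -1), (13, 1)]),
    (12, [(4, -1), (5, 1), (8, 1), (9, -1), (11, -1), (12, -1)]),
    (13, [(4, 1), (5, -1), (8, -1), (9, 1), (10, -1), (13, -1)]),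
    (14, [(6, -1), (7, 1), (10, 1), (11, -1), (12, -1), (13, 1), (14, -2), (15, -2)]),
    (15, [(6, 1), (7, -1), (10, -1), (11, 1), (12, 1), (13, -1), (14, -2), (15, -2)]),
    (18, [(16, 1), (17, -1), (18, -1), (20, -1)]), (19, [(16, -1), (17, 1), (19, -1), (21, -1)]),
    (20, [(16, 1), (17, -1), (19, 1), (20, -1)]), (21, [(16, -1), (17, 1), (18, 1), (21, -1)]),
    (22, [(18, 1), (19, -1), (20, -1), (21, 1), (22, -2), (23, 2)]),
    (23, [(18, -1), (19, 1), (20, 1), (21, -1), (22, 2), (23, -2)]),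
    (24, [(16, 1), (17, -1), (24, -2)]), (25, [(16, -1), (17, 1), (25, -2)]),
    (26, [(18, 1), (19, -1), (24, -1), (25, 1), (26, -1), (27, 1), (28, 1), (29, -1)]),
    (27, [(18, -1), (19, 1), (24, 1), (25, -1), (26, 1), (27, -1), (28, -1), (29, 1)]),
    (28, [(20, 1), (21, -1), (24, -1), (25, 1), (26, 1), (27, -1), (28, -1), (29, 1)]),
    (29, [(20, -1), (21, 1), (24, 1), (25, -1), (26, -1), (27, 1), (28, 1), (29, -1)]),
    (30, [(22, 1), (23, -1), (26, -1), (27, 1), (28, 1), (29, -1), (30, -1), (31, -1)]),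
    (31, [(22, -1), (23, 1), (26, 1), (27, -1), (28, -1), (29, 1), (30, -1), (31, -1)])]

/-- Coboundary into degree 6. -/
def tA6 : ℕ → Form := rd
  [(0, [(0, 4)]), (1, [(1, 4)]), (2, [(0, -1), (1, 1), (2, 1), (4, -1)]),
    (3, [(0, 1), (1, -1), (3, 1), (5, -1)]), (4, [(0, -1), (1, 1), (3, 1), (4, 1)]),
    (5, [(0, 1), (1, -1), (2, 1), (5, 1)]),
    (6, [(2, -1), (3, 1), (4, 1), (5, -1), (6, 2), (7, 2)]),
    (7, [(2, 1), (3, -1), (4, -1), (5, 1), (6, 2), (7, 2)]), (8, [(0, -1), (1, 1)]),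
    (9, [(0, 1), (1, -1)]),
    (10, [(2, -1), (3, 1), (8, 1), (9, -1), (10, 1), (11, -1), (12, 1), (13, -1)]),
    (11, [(2, 1), (3, -1), (8, -1), (9, 1), (10, -1), (11, 1), (12, -1), (13, 1)]),
    (12, [(4, -1), (5, 1), (8, 1), (9, -1), (10, 1), (11, -1), (12, 1), (13, -1)]),
    (13, [(4, 1), (5, -1), (8, -1), (9, 1), (10, -1), (11, 1), (12, -1), (13, 1)]),
    (14, [(6, -1), (7, 1), (10, 1), (11, -1), (12, -1), (13, 1), (14, 1), (15, -1)]),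
    (15, [(6, 1), (7, -1), (10, -1), (11, 1), (12, 1), (13, -1), (14, -1), (15, 1)]),
    (16, [(16, 2)]), (17, [(17, 2)]),
    (18, [(16, 1), (17, -1), (18, 1), (19, -1), (20, -1), (21, 1)]),
    (19, [(16, -1), (17, 1), (18, -1), (19, 1), (20, 1), (21, -1)]),
    (20, [(16, 1), (17, -1), (18, -1), (19, 1), (20, 1), (21, -1)]),
    (21, [(16, -1), (17, 1), (18, 1), (19, -1), (20, -1), (21, 1)]),
    (22, [(18, 1), (19, -1), (20, -1), (21, 1), (22, 1), (23, 1)]),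
    (23, [(18, -1), (19, 1), (20, 1), (21, -1), (22, 1), (23, 1)]), (24, [(16, 1), (17, -1)]),
    (25, [(16, -1), (17, 1)]), (26, [(18, 1), (19, -1), (24, -1), (25, 1), (26, 1), (28, 1)]),
    (27, [(18, -1), (19, 1), (24, 1), (25, -1), (27, 1), (29, 1)]),
    (28, [(20, 1), (21, -1), (24, -1), (25, 1), (27, -1), (28, 1)]),
    (29, [(20, -1), (21, 1), (24, 1), (25, -1), (26, -1), (29, 1)]),
    (30, [(22, 1), (23, -1), (26, -1), (27, 1), (28, 1), (29, -1), (30, 2), (31, -2)]),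
    (31, [(22, -1), (23, 1), (26, 1), (27, -1), (28, -1), (29, 1), (30, -2), (31, 2)])]

/-- Partial homotopy. -/
def th0 : ℕ → Form := rd
  [(0, [(5, 1)])]

/-- Partial homotopy, multiplied by four. -/
def tg0 : ℕ → Form := rd
  [(0, [(0, 1)]), (1, [(0, 1), (8, 4)]), (2, [(2, 4), (3, -4), (4, 4), (8, -12)]),
    (3, [(3, 4), (8, 4)]), (4, [(3, -4), (4, 4), (8, -8)]),
    (8, [(2, 4), (3, -8), (4, 4), (8, -16), (10, 4)]), (16, [(16, 2)]), (17, [(16, 2), (18, -4)])]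

/-- Projection to the cohomology. -/
def tp0 : ℕ → Form := rd
  [(0, [(5, -1), (9, 1)])]

/-- Representing cocycles. -/
def ti0 : ℕ → Form := rd
  [(8, [(0, 1)]), (9, [(0, 1)])]

/-- Bounding cochains for multiples of the cocycles. -/
def tw0 : ℕ → Form := rd
  []

/-- Partial homotopy. -/
def th1 : ℕ → Form := rd
  [(0, [(8, -1)]), (2, [(3, 1), (7, 1), (8, 1)]), (3, [(5, 1), (7, -1), (8, 1)]),
    (5, [(3, -1), (5, 1), (7, -1)]), (8, [(3, 1), (5, -1), (7, 1), (13, -1)]), (16, [(24, 1)])]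

/-- Partial homotopy, multiplied by four. -/
def tg1 : ℕ → Form := rd
  [(0, [(8, -4)]), (2, [(2, -4), (8, 4)]), (6, [(2, 4), (6, -4), (8, -4)]),
    (9, [(2, 2), (6, 2), (8, -2), (10, -2), (11, 2), (14, -2)]),
    (10, [(2, 2), (6, -6), (8, -2), (10, 2), (11, -2), (12, -4), (14, 6)]),
    (11, [(2, -2), (6, 2), (8, 2), (10, -2), (11, -2), (14, -2)]),
    (12, [(6, -4), (10, 4), (12, -4), (14, 4)]), (16, [(24, 4)]),
    (18, [(18, -1), (19, -1), (21, 2), (22, 1), (24, 2)]),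
    (19, [(18, 1), (19, -3), (21, 2), (22, -1), (24, -2)]),
    (20, [(18, -3), (19, 1), (21, -2), (22, -1), (24, 2)]),
    (21, [(18, -1), (19, -1), (21, -2), (22, 1), (24, -2)]),
    (25, [(18, 2), (19, -2), (22, 2), (24, -4), (28, 4)])]

/-- Projection to the cohomology. -/
def tp1 : ℕ → Form := rd
  [(0, [(4, 1), (5, -1), (7, 1), (8, -2)]), (1, [(1, 1)]), (2, [(17, 1)])]

/-- Representing cocycles. -/
def ti1 : ℕ → Form := rd
  [(0, [(1, 1)]), (1, [(1, 1)]), (2, [(0, -1)]), (4, [(0, 1)]), (6, [(0, 2)]), (10, [(0, 1)]),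
    (11, [(0, -1)]), (16, [(2, 1)]), (17, [(2, 1)])]

/-- Bounding cochains for multiples of the cocycles. -/
def tw1 : ℕ → Form := rd
  [(0, [(1, 1)]), (1, [(1, 1)]), (16, [(2, 1)]), (17, [(2, 1)])]

/-- Partial homotopy. -/
def th2 : ℕ → Form := rd
  [(1, [(8, 1)]), (3, [(5, -1), (8, -1)]), (6, [(12, 1), (13, -1), (15, 1)]), (10, [(13, -1)]),
    (11, [(5, 1), (8, 1), (11, -1)]), (12, [(5, -1), (8, -1), (11, 1), (12, -1)]),
    (16, [(25, -1)]), (18, [(21, 1), (25, -1)]), (19, [(19, -1), (25, 1)]),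
    (20, [(19, -1), (20, -1)]), (24, [(19, 1), (21, 1), (25, -2), (27, 1)])]

/-- Partial homotopy, multiplied by four. -/
def tg2 : ℕ → Form := rd
  [(0, [(1, 1), (8, -4)]), (1, [(1, 1)]), (2, [(2, 4), (3, -4), (4, 4), (8, -12)]),
    (3, [(3, 4), (8, 4)]), (4, [(3, -4), (4, 4), (8, -8)]),
    (6, [(2, 2), (3, -2), (6, 2), (8, -4)]), (10, [(2, 4), (3, -8), (4, 4), (8, -16), (10, 4)]),
    (14, [(2, -2), (3, 6), (4, -4), (6, 2), (8, 12), (10, -4), (14, 4)]), (16, [(16, 2)]),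
    (17, [(16, 2), (24, -4)]), (18, [(18, 4), (24, -4)]),
    (22, [(18, -2), (22, 2), (24, 2), (26, 2), (27, 2), (30, 2)]),
    (23, [(18, -2), (22, 2), (24, 2), (26, -2), (27, -2), (30, -2)]), (24, [(28, -4)]),
    (26, [(18, -4), (24, 4), (26, 4), (28, -4)]), (29, [(18, 4), (24, -4), (27, 4), (28, 4)])]

/-- Projection to the cohomology. -/
def tp2 : ℕ → Form := rd
  [(0, [(5, -2), (7, 2), (8, -1), (9, 1), (12, -2), (13, 2), (15, -2)]),
    (1, [(19, -2), (20, -1), (21, -1), (25, 2), (27, -1), (28, -1)]),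
    (2, [(5, -1), (7, 1), (8, -1), (12, -1), (13, 1), (15, -1)])]

/-- Representing cocycles. -/
def ti2 : ℕ → Form := rd
  [(6, [(2, -1)]), (7, [(2, 1)]), (9, [(0, 1), (2, -2)]), (10, [(0, 1), (2, -2)]), (14, [(0, -1)]),
    (22, [(1, 1)]), (23, [(1, -1)]), (24, [(1, -1)]), (28, [(1, -1)]), (29, [(1, 1)])]

/-- Bounding cochains for multiples of the cocycles. -/
def tw2 : ℕ → Form := rd
  [(6, [(2, 2)]), (9, [(2, 1)]), (10, [(2, 1)]), (11, [(2, 1)]), (12, [(2, -2)]), (18, [(1, 1)]),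
    (19, [(1, -1)]), (20, [(1, -1)]), (21, [(1, 1)]), (24, [(1, 2)])]

/-- Partial homotopy. -/
def th3 : ℕ → Form := rd
  [(1, [(8, 1)]), (2, [(3, 1), (5, 1), (8, 2)]), (4, [(4, 1), (8, -1)]), (5, [(3, -1), (8, -1)]),
    (8, [(3, 1), (4, 1), (13, -1), (15, 1)]), (10, [(15, -1)]), (16, [(24, 1)]),
    (18, [(20, -1), (24, 1), (29, -1)]), (20, [(29, -1)]), (22, [(20, -1), (23, 1), (24, 1)]),
    (27, [(20, -1), (24, 1), (27, 1), (29, -1)]), (28, [(20, -1), (24, 1), (27, 1), (28, 1)])]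

/-- Partial homotopy, multiplied by four. -/
def tg3 : ℕ → Form := rd
  [(1, [(8, 4)]), (2, [(3, 4), (8, 4)]), (6, [(3, -4), (6, -4), (8, -4)]),
    (9, [(3, -2), (6, 2), (8, -2), (10, -2), (11, 2), (14, -1), (15, 1)]),
    (10, [(3, -2), (6, -6), (8, -2), (10, 2), (11, -2), (12, -4), (14, 3), (15, -3)]),
    (11, [(3, 2), (6, 2), (8, 2), (10, -2), (11, -2), (14, -1), (15, 1)]),
    (12, [(6, -4), (10, 4), (12, -4), (14, 2), (15, -2)]), (14, [(14, -1), (15, -1)]),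
    (16, [(24, 4)]), (18, [(18, -4), (24, 4)]), (19, [(18, 4), (19, -4), (21, 4), (24, -4)]),
    (21, [(18, -4), (21, -4)]), (22, [(18, -6), (19, 2), (21, -4), (22, -2), (24, 4)]),
    (25, [(24, -2), (25, -2)]), (26, [(18, -8), (19, 4), (21, -4), (24, 6), (25, -2), (26, -4)]),
    (30, [(18, 2), (19, -2), (22, -2), (24, -2), (25, 2), (26, 4), (30, -4)])]

/-- Projection to the cohomology. -/
def tp3 : ℕ → Form := rd
  [(0, [(0, 1)]), (1, [(4, 1), (5, -1), (7, 1), (8, -2)]), (2, [(17, 1)]),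
    (3, [(20, -3), (23, 1), (24, 3), (27, 2), (28, 1), (29, -1), (31, 1)])]

/-- Representing cocycles. -/
def ti3 : ℕ → Form := rd
  [(0, [(0, 1)]), (1, [(0, 1)]), (6, [(1, 1)]), (7, [(1, 1)]), (16, [(2, 1)]), (17, [(2, 1)]),
    (30, [(3, -1)]), (31, [(3, 1)])]

/-- Bounding cochains for multiples of the cocycles. -/
def tw3 : ℕ → Form := rd
  [(0, [(0, 1)]), (1, [(0, 1)]), (6, [(1, 1)]), (8, [(1, -1)]), (10, [(1, 1)]), (16, [(2, 1)]),
    (17, [(2, 1)]), (22, [(3, -1)]), (23, [(3, 1)])]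

/-- Partial homotopy. -/
def th4 : ℕ → Form := rd
  [(1, [(8, 1)]), (3, [(5, -1), (8, -1)]), (6, [(5, -1), (7, 1), (8, -1)]), (10, [(13, -1)]),
    (11, [(5, 1), (8, 1), (11, -1)]), (12, [(5, -1), (8, -1), (11, 1), (12, -1)]),
    (16, [(25, -1)]), (18, [(21, 1), (25, -1)]), (19, [(19, -1), (25, 1)]),
    (20, [(19, -1), (20, -1)]), (22, [(30, 1)]), (24, [(19, 1), (21, 1), (25, -2), (27, 1)])]

/-- Partial homotopy, multiplied by four. -/
def tg4 : ℕ → Form := rd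
  [(0, [(1, 1), (8, -4)]), (1, [(1, 1)]), (2, [(2, 4), (3, -4), (4, 4), (8, -12)]),
    (3, [(3, 4), (8, 4)]), (4, [(3, -4), (4, 4), (8, -8)]),
    (6, [(2, 2), (3, -2), (6, 2), (8, -4)]), (10, [(2, 4), (3, -8), (4, 4), (8, -16), (10, 4)]),
    (14, [(2, -2), (3, 6), (4, -4), (6, 2), (8, 12), (10, -4), (14, 4)]), (16, [(16, 2)]),
    (17, [(16, 2), (24, -4)]), (18, [(18, 4), (24, -4)]),
    (22, [(18, -2), (22, 2), (24, 2), (26, 2), (27, 2), (30, 2)]),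
    (23, [(18, -2), (22, 2), (24, 2), (26, -2), (27, -2), (30, -2)]), (24, [(28, -4)]),
    (26, [(18, -4), (24, 4), (26, 4), (28, -4)]), (29, [(18, 4), (24, -4), (27, 4), (28, 4)])]

/-- Projection to the cohomology. -/
def tp4 : ℕ → Form := rd
  [(0, [(8, -1), (9, -1)]), (1, [(19, 2), (20, 1), (21, 1), (25, -2), (27, 1), (28, 1)]),
    (2, [(5, -1), (7, 1), (8, -1), (12, -1), (13, 1), (15, -1)]), (3, [(30, -1), (31, -1)])]

/-- Representing cocycles. -/
def ti4 : ℕ → Form := rd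
  [(9, [(0, -1)]), (10, [(0, -1)]), (14, [(0, 1), (2, -1)]), (15, [(2, -1)]),
    (22, [(1, -1), (3, -1)]), (23, [(1, 1), (3, 1)]), (24, [(1, 1)]), (28, [(1, 1)]),
    (29, [(1, -1)]), (31, [(3, -1)])]

/-- Bounding cochains for multiples of the cocycles. -/
def tw4 : ℕ → Form := rd
  [(9, [(0, 1)]), (10, [(0, 1)]), (11, [(0, 1)]), (12, [(0, -2)]), (14, [(0, -1), (2, 1)]),
    (22, [(1, 1), (3, 1)]), (24, [(1, -1)]), (26, [(1, 1)]), (30, [(3, 1)])]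

/-- Partial homotopy. -/
def th5 : ℕ → Form := rd
  [(1, [(8, 1)]), (2, [(3, 1), (5, 1), (8, 2)]), (4, [(4, 1), (8, -1)]), (5, [(3, -1), (8, -1)]),
    (8, [(3, 1), (4, 1), (13, -1), (15, 1)]), (10, [(15, -1)]), (16, [(24, 1)]),
    (18, [(20, -1), (24, 1), (29, -1)]), (20, [(29, -1)]), (22, [(20, -1), (23, 1), (24, 1)]),
    (27, [(20, -1), (24, 1), (27, 1), (29, -1)]), (28, [(20, -1), (24, 1), (27, 1), (28, 1)])]

/-- Partial homotopy, multiplied by four. -/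
def tg5 : ℕ → Form := rd
  [(1, [(8, 4)]), (2, [(3, 4), (8, 4)]), (6, [(3, -4), (6, -4), (8, -4)]),
    (9, [(3, -2), (6, 2), (8, -2), (10, -2), (11, 2), (14, -1), (15, 1)]),
    (10, [(3, -2), (6, -6), (8, -2), (10, 2), (11, -2), (12, -4), (14, 3), (15, -3)]),
    (11, [(3, 2), (6, 2), (8, 2), (10, -2), (11, -2), (14, -1), (15, 1)]),
    (12, [(6, -4), (10, 4), (12, -4), (14, 2), (15, -2)]), (14, [(14, -1), (15, -1)]),
    (16, [(24, 4)]), (18, [(18, -4), (24, 4)]), (19, [(18, 4), (19, -4), (21, 4), (24, -4)]),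
    (21, [(18, -4), (21, -4)]), (22, [(18, -6), (19, 2), (21, -4), (22, -2), (24, 4)]),
    (25, [(24, -2), (25, -2)]), (26, [(18, -8), (19, 4), (21, -4), (24, 6), (25, -2), (26, -4)]),
    (30, [(18, 2), (19, -2), (22, -2), (24, -2), (25, 2), (26, 4), (30, -4)])]

/-- Projection to the cohomology. -/
def tp5 : ℕ → Form := rd
  [(0, [(0, 1)]), (1, [(4, 1), (5, -1), (7, 1), (8, -2)]), (2, [(17, 1)]),
    (3, [(20, -3), (23, 1), (24, 3), (27, 2), (28, 1), (29, -1), (31, 1)])]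

/-- Representing cocycles. -/
def ti5 : ℕ → Form := rd
  [(0, [(0, 1)]), (1, [(0, 1)]), (6, [(1, 1)]), (7, [(1, 1)]), (16, [(2, 1)]), (17, [(2, 1)]),
    (30, [(3, -1)]), (31, [(3, 1)])]

/-- Bounding cochains for multiples of the cocycles. -/
def tw5 : ℕ → Form := rd
  [(0, [(0, 1)]), (1, [(0, 1)]), (6, [(1, 1)]), (8, [(1, -1)]), (10, [(1, 1)]), (16, [(2, 1)]),
    (17, [(2, 1)]), (22, [(3, -1)]), (23, [(3, 1)])]

/-- Torsion orders. -/
def tds (L : List ℤ) (k : ℕ) : ℤ := L.getD k 0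

lemma dl_tA1 : ∀ i ∈ Xs 1, Zr 0 (dl 1 i ++ sm (-1) (tA1 i)) := by decide +kernel

lemma dl_tA2 : ∀ i ∈ Xs 2, Zr 0 (dl 2 i ++ sm (-1) (tA2 i)) := by decide +kernel

lemma dl_tA3 : ∀ i ∈ Xs 3, Zr 0 (dl 3 i ++ sm (-1) (tA3 i)) := by decide +kernel

lemma dl_tA4 : ∀ i ∈ Xs 4, Zr 0 (dl 4 i ++ sm (-1) (tA4 i)) := by decide +kernel

lemma dl_tA5 : ∀ i ∈ Xs 5, Zr 0 (dl 5 i ++ sm (-1) (tA5 i)) := by decide +kernel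

lemma dl_tA6 : ∀ i ∈ Xs 6, Zr 0 (dl 6 i ++ sm (-1) (tA6 i)) := by decide +kernel

lemma dl_tA7 : ∀ i ∈ Xs 7, Zr 0 (dl 7 i ++ sm (-1) (tA5 i)) := by decide +kernel

theorem cert0 : Cert (Xs 0) (Xs 1) (Xs 2) tA1 tA2 th0 tg0 tp0 ti0 tw0
    (tds [0]) 1 := by
  constructor <;> decide +kernel

theorem cert1 : Cert (Xs 1) (Xs 2) (Xs 3) tA2 tA3 th1 tg1 tp1 ti1 tw1
    (tds [0, 4, 2]) 3 := by
  constructor <;> decide +kernel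

theorem cert2 : Cert (Xs 2) (Xs 3) (Xs 4) tA3 tA4 th2 tg2 tp2 ti2 tw2
    (tds [0, 4, 2]) 3 := by
  constructor <;> decide +kernel

theorem cert3 : Cert (Xs 3) (Xs 4) (Xs 5) tA4 tA5 th3 tg3 tp3 ti3 tw3
    (tds [4, 2, 2, 2]) 4 := by
  constructor <;> decide +kernel

theorem cert4 : Cert (Xs 4) (Xs 5) (Xs 6) tA5 tA6 th4 tg4 tp4 ti4 tw4
    (tds [4, 2, 2, 2]) 4 := by
  constructor <;> decide +kernel

theorem cert5 : Cert (Xs 5) (Xs 6) (Xs 7) tA6 tA5 th5 tg5 tp5 ti5 tw5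
    (tds [4, 2, 2, 2]) 4 := by
  constructor <;> decide +kernel

end Contr

namespace Contr

lemma mem_Xs (n i : ℕ) : i ∈ Xs n ↔ i < 32 ∧ wt i ≤ n := by simp [Xs]

lemma mem_Xs' (n m i : ℕ) (hn : 4 ≤ n) (hm : 4 ≤ m) : i ∈ Xs n ↔ i < 32 ∧ wt i ≤ m := by
  have := wt_le i
  rw [mem_Xs]
  omega

/-- First target. -/
def q1 : (ℕ → ℤ) →+ ℤ := AddMonoidHom.mk' (fun v => v 0) (fun _ _ => rfl)
/-- Second target. -/
def q2 : (ℕ → ℤ) →+ (ℤ × ZMod 4 × ZMod 2) :=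
  AddMonoidHom.mk' (fun v => (v 0, ((v 1 : ℤ) : ZMod 4), ((v 2 : ℤ) : ZMod 2)))
    (fun x y => by simp)
/-- Third target. -/
def q3 : (ℕ → ℤ) →+ (ZMod 4 × (Fin 3 → ZMod 2)) :=
  AddMonoidHom.mk' (fun v => (((v 0 : ℤ) : ZMod 4), fun j => ((v (j.1 + 1) : ℤ) : ZMod 2)))
    (fun x y => by
      refine Prod.ext ?_ ?_
      · simp
      · funext j; simp)

lemma z4_zero (a : ℤ) : (a : ZMod 4) = 0 ↔ (4 : ℤ) ∣ a := ZMod.intCast_zmod_eq_zero_iff_dvd a 4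
lemma z2_zero (a : ℤ) : (a : ZMod 2) = 0 ↔ (2 : ℤ) ∣ a := ZMod.intCast_zmod_eq_zero_iff_dvd a 2

lemma q1_ker (v : ℕ → ℤ) : q1 v = 0 ↔ ∀ k < 1, tds [0] k ∣ v k := by
  change v 0 = 0 ↔ _
  constructor
  · intro h k hk
    interval_cases k
    exact zero_dvd_iff.2 h
  · intro h
    exact zero_dvd_iff.1 (h 0 (by norm_num))

lemma q1_surj (q : ℤ) : ∃ v, q1 v = q := ⟨fun _ => q, rfl⟩

lemma q2_ker (v : ℕ → ℤ) : q2 v = 0 ↔ ∀ k < 3, tds [0, 4, 2] k ∣ v k := by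
  change (v 0, ((v 1 : ℤ) : ZMod 4), ((v 2 : ℤ) : ZMod 2)) = 0 ↔ _
  rw [Prod.mk_eq_zero, Prod.mk_eq_zero, z4_zero, z2_zero]
  constructor
  · rintro ⟨h0, h1, h2⟩ k hk
    interval_cases k
    exacts [zero_dvd_iff.2 h0, h1, h2]
  · intro h
    exact ⟨zero_dvd_iff.1 (h 0 (by norm_num)), h 1 (by norm_num), h 2 (by norm_num)⟩

lemma q2_surj (q : ℤ × ZMod 4 × ZMod 2) : ∃ v, q2 v = q := by
  obtain ⟨a, b, c⟩ := q
  obtain ⟨b, rfl⟩ := ZMod.intCast_surjective b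
  obtain ⟨c, rfl⟩ := ZMod.intCast_surjective c
  exact ⟨fun k => if k = 0 then a else if k = 1 then b else c, rfl⟩

lemma q3_ker (v : ℕ → ℤ) : q3 v = 0 ↔ ∀ k < 4, tds [4, 2, 2, 2] k ∣ v k := by
  change (((v 0 : ℤ) : ZMod 4), fun j : Fin 3 => ((v (j.1 + 1) : ℤ) : ZMod 2)) = 0 ↔ _
  rw [Prod.mk_eq_zero, z4_zero, funext_iff]
  constructor
  · rintro ⟨h0, h1⟩ k hk
    have h2 : ∀ j : Fin 3, (2 : ℤ) ∣ v (j.1 + 1) := fun j => (z2_zero _).1 (h1 j)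
    interval_cases k
    exacts [h0, h2 0, h2 1, h2 2]
  · intro h
    refine ⟨h 0 (by norm_num), fun j => (z2_zero _).2 ?_⟩
    fin_cases j
    exacts [h 1 (by norm_num), h 2 (by norm_num), h 3 (by norm_num)]

lemma q3_surj (q : ZMod 4 × (Fin 3 → ZMod 2)) : ∃ v, q3 v = q := by
  obtain ⟨a, b⟩ := q
  obtain ⟨a, rfl⟩ := ZMod.intCast_surjective a
  choose c hc using fun j => ZMod.intCast_surjective (b j)
  refine ⟨fun k => if k = 0 then a else if k = 1 then c 0 else if k = 2 then c 1 else c 2, ?_⟩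
  refine Prod.ext rfl ?_
  funext j
  refine Eq.trans ?_ (hc j)
  fin_cases j <;> rfl

lemma H1 : Nonempty (H 1 ≃+ ℤ) :=
  cert_main (m := 0) cert0 (mem_Xs _) (mem_Xs _) (mem_Xs _)
    (fun F i hi => dl_eval' F _ i _ (dl_tA1 i hi)) (fun F i hi => dl_eval' F _ i _ (dl_tA2 i hi))
    q1 q1_ker q1_surj

lemma H2 : Nonempty (H 2 ≃+ (ℤ × ZMod 4 × ZMod 2)) :=
  cert_main (m := 1) cert1 (mem_Xs _) (mem_Xs _) (mem_Xs _)
    (fun F i hi => dl_eval' F _ i _ (dl_tA2 i hi)) (fun F i hi => dl_eval' F _ i _ (dl_tA3 i hi))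
    q2 q2_ker q2_surj

lemma H3 : Nonempty (H 3 ≃+ (ℤ × ZMod 4 × ZMod 2)) :=
  cert_main (m := 2) cert2 (mem_Xs _) (mem_Xs _) (mem_Xs _)
    (fun F i hi => dl_eval' F _ i _ (dl_tA3 i hi)) (fun F i hi => dl_eval' F _ i _ (dl_tA4 i hi))
    q2 q2_ker q2_surj

lemma H4 : Nonempty (H 4 ≃+ (ZMod 4 × (Fin 3 → ZMod 2))) :=
  cert_main (m := 3) cert3 (mem_Xs _) (mem_Xs _) (mem_Xs _)
    (fun F i hi => dl_eval' F _ i _ (dl_tA4 i hi)) (fun F i hi => dl_eval' F _ i _ (dl_tA5 i hi))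
    q3 q3_ker q3_surj

lemma dl_even (k i : ℕ) : dl (6 + 2 * k) i = dl 6 i := by
  induction k with
  | zero => rfl
  | succ k ih => rw [← ih, ← dl_per _ _ (show 5 ≤ 6 + 2 * k by omega)]; rfl

lemma dl_odd (k i : ℕ) : dl (5 + 2 * k) i = dl 5 i := by
  induction k with
  | zero => rfl
  | succ k ih => rw [← ih, ← dl_per _ _ (show 5 ≤ 5 + 2 * k by omega)]; rfl

lemma Hodd (k : ℕ) : Nonempty (H (4 + 2 * k + 1) ≃+ (ZMod 4 × (Fin 3 → ZMod 2))) := by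
  refine cert_main (m := 4 + 2 * k) cert4 (fun i => mem_Xs' _ _ i (by omega) (by omega))
    (fun i => mem_Xs' _ _ i (by omega) (by omega)) (fun i => mem_Xs' _ _ i (by omega) (by omega))
    (fun F i hi => dl_eval' F _ i _ ?_) (fun F i hi => dl_eval' F _ i _ ?_)
    q3 q3_ker q3_surj
  · rw [show 4 + 2 * k + 1 = 5 + 2 * k by ring, dl_odd]
    exact dl_tA5 i hi
  · rw [show 4 + 2 * k + 2 = 6 + 2 * k by ring, dl_even]
    exact dl_tA6 i hi

lemma Heven (k : ℕ) : Nonempty (H (5 + 2 * k + 1) ≃+ (ZMod 4 × (Fin 3 → ZMod 2))) := by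
  refine cert_main (m := 5 + 2 * k) cert5 (fun i => mem_Xs' _ _ i (by omega) (by omega))
    (fun i => mem_Xs' _ _ i (by omega) (by omega)) (fun i => mem_Xs' _ _ i (by omega) (by omega))
    (fun F i hi => dl_eval' F _ i _ ?_) (fun F i hi => dl_eval' F _ i _ ?_)
    q3 q3_ker q3_surj
  · rw [show 5 + 2 * k + 1 = 6 + 2 * k by ring, dl_even]
    exact dl_tA6 i hi
  · rw [show 5 + 2 * k + 2 = 5 + 2 * (k + 1) by ring, dl_odd, ← dl_odd 1]
    exact dl_tA7 i hi

lemma Hbig (i : ℕ) (hi : 4 ≤ i) : Nonempty (H i ≃+ (ZMod 4 × (Fin 3 → ZMod 2))) := by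
  obtain rfl | ⟨k, rfl | rfl⟩ : i = 4 ∨ ∃ k, i = 4 + 2 * k + 1 ∨ i = 5 + 2 * k + 1 := by
    rcases Nat.even_or_odd' i with ⟨c, h | h⟩
    · by_cases h4 : i = 4
      · exact Or.inl h4
      · exact Or.inr ⟨c - 3, Or.inr (by omega)⟩
    · exact Or.inr ⟨c - 2, Or.inl (by omega)⟩
  · exact H4
  · exact Hodd k
  · exact Heven k

end Contr

theorem cohomology_of_first_counterexample :
    Nonempty (H 1 ≃+ ℤ) ∧
    Nonempty (H 2 ≃+ (ℤ × ZMod 4 × ZMod 2)) ∧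
    Nonempty (H 3 ≃+ (ℤ × ZMod 4 × ZMod 2)) ∧
    (∀ i, 4 ≤ i → Nonempty (H i ≃+ (ZMod 4 × (Fin 3 → ZMod 2)))) := by
  exact ⟨Contr.H1, Contr.H2, Contr.H3, Contr.Hbig⟩
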